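/- arXiv:2504.06506 — 4 statements merged into one kernel-verified Lean document; each statement's English description precedes it below -/
import Mathlib

section
/- Let H₁, H₂, H₃ be complex Hilbert spaces, and let T₁ : dom(T₁) ⊆ H₁ → H₂ and T₂ : dom(T₂) ⊆ H₂ → H₃ be Fredholm operators (in particular densely defined and closed). Then the product T₂T₁ is densely defined, closed, and Fredholm, and ind(T₂T₁) = ind(T₁) + ind(T₂). -/
open scoped InnerProductSpace
open Cardinal

noncomputable section

variable {E F G H : Type*}
  [NormedAddCommGroup E] [InnerProductSpace ℂ E] [CompleteSpace E]
  [NormedAddCommGroup F] [InnerProductSpace ℂ F] [CompleteSpace F]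
  [NormedAddCommGroup G] [InnerProductSpace ℂ G] [CompleteSpace G]
  [NormedAddCommGroup H] [InnerProductSpace ℂ H] [CompleteSpace H]

/-- The product (composition) `T₂T₁` of two partially defined linear operators, with domain
`dom(T₂T₁) = {f ∈ dom T₁ | T₁ f ∈ dom T₂}` and value `(T₂T₁) f = T₂ (T₁ f)`. -/
def pcomp {E F G : Type*}
    [NormedAddCommGroup E] [InnerProductSpace ℂ E]
    [NormedAddCommGroup F] [InnerProductSpace ℂ F]
    [NormedAddCommGroup G] [InnerProductSpace ℂ G]
    (T₂ : F →ₗ.[ℂ] G) (T₁ : E →ₗ.[ℂ] F) : E →ₗ.[ℂ] G where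
  domain := (T₂.domain.comap T₁.toFun).map T₁.domain.subtype
  toFun := T₂.toFun ∘ₗ
    (T₁.toFun.restrict (p := T₂.domain.comap T₁.toFun) (q := T₂.domain) fun _ hx => hx) ∘ₗ
    (Submodule.equivMapOfInjective T₁.domain.subtype (Submodule.injective_subtype _)
      (T₂.domain.comap T₁.toFun)).symm.toLinearMap

/-- The identity as a partially defined operator (domain all of `X`). -/
def pid (X : Type*) [NormedAddCommGroup X] [InnerProductSpace ℂ X] : X →ₗ.[ℂ] X :=
  ⟨⊤, (⊤ : Submodule ℂ X).subtype⟩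

/-- Powers of a partially defined operator: `S⁰ = I`, `S¹ = S`, and recursively
`dom(S^m) = {f ∈ dom(S^{m-1}) | S^{m-1} f ∈ dom S}`, `S^m f = S (S^{m-1} f)`. -/
def pmapPow {X : Type*} [NormedAddCommGroup X] [InnerProductSpace ℂ X]
    (S : X →ₗ.[ℂ] X) : ℕ → X →ₗ.[ℂ] X
  | 0 => pid X
  | 1 => S
  | (n + 2) => pcomp S (pmapPow S (n + 1))

/-- The kernel of `A - μ·I` as a submodule of the domain of `A`. -/
def kerAt {X : Type*} [NormedAddCommGroup X] [InnerProductSpace ℂ X]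
    (A : X →ₗ.[ℂ] X) (μ : ℂ) : Submodule ℂ A.domain :=
  LinearMap.ker (A.toFun - μ • A.domain.subtype)

/-- Deficiency index `n₊(S) = dim ker(S* - i·I)`, a Hilbert-space dimension as a cardinal. -/
def nPlus (S : H →ₗ.[ℂ] H) : Cardinal := Module.rank ℂ (kerAt S.adjoint Complex.I)

/-- Deficiency index `n₋(S) = dim ker(S* + i·I)`, a Hilbert-space dimension as a cardinal. -/
def nMinus (S : H →ₗ.[ℂ] H) : Cardinal := Module.rank ℂ (kerAt S.adjoint (-Complex.I))

/-- The symmetry condition `⟪Sf, g⟫ = ⟪f, Sg⟫` for all `f, g` in the domain of `S`. -/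
def IsSymmP {X : Type*} [NormedAddCommGroup X] [InnerProductSpace ℂ X]
    (S : X →ₗ.[ℂ] X) : Prop :=
  ∀ f g : S.domain, ⟪S f, (g : X)⟫_ℂ = ⟪(f : X), S g⟫_ℂ

/-- The defect number of `T` at `0`: `def(T,0) = dim ker(T*)`, as a cardinal. -/
def defect0 (T : E →ₗ.[ℂ] F) : Cardinal := Module.rank ℂ (LinearMap.ker T.adjoint.toFun)

/-- `0` belongs to the field of regularity of `T`: there is `c > 0` with
`‖T f‖ ≥ c ‖f‖` for all `f ∈ dom T`. -/
def ZeroRegular {X Y : Type*} [NormedAddCommGroup X] [InnerProductSpace ℂ X]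
    [NormedAddCommGroup Y] [InnerProductSpace ℂ Y] (T : X →ₗ.[ℂ] Y) : Prop :=
  ∃ c : ℝ, 0 < c ∧ ∀ f : T.domain, c * ‖(f : X)‖ ≤ ‖T f‖

/-- `T` is Fredholm: densely defined, closed, with closed range, and finite-dimensional
kernel and cokernel (= kernel of the adjoint). -/
def IsFredholmP (T : E →ₗ.[ℂ] F) : Prop :=
  Dense (T.domain : Set E) ∧ T.IsClosed ∧
    IsClosed ((LinearMap.range T.toFun : Submodule ℂ F) : Set F) ∧
    Module.rank ℂ (LinearMap.ker T.toFun) < ℵ₀ ∧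
    Module.rank ℂ (LinearMap.ker T.adjoint.toFun) < ℵ₀

/-- `T` is left semi-Fredholm: densely defined, closed, with closed range and
finite-dimensional kernel. -/
def IsLeftSemiFredholmP (T : E →ₗ.[ℂ] F) : Prop :=
  Dense (T.domain : Set E) ∧ T.IsClosed ∧
    IsClosed ((LinearMap.range T.toFun : Submodule ℂ F) : Set F) ∧
    Module.rank ℂ (LinearMap.ker T.toFun) < ℵ₀

/-- The (semi-)Fredholm index `ind(T) = dim ker T - dim ker T*` (as an integer,
via `finrank`). -/
def indP (T : E →ₗ.[ℂ] F) : ℤ :=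
  (Module.finrank ℂ (LinearMap.ker T.toFun) : ℤ) -
    (Module.finrank ℂ (LinearMap.ker T.adjoint.toFun) : ℤ)

/-- The kernel of the adjoint is the orthogonal complement of the range. -/
lemma adj_ker_map (T : E →ₗ.[ℂ] F) (hd : Dense (T.domain : Set E)) :
    (LinearMap.ker T.adjoint.toFun).map T.adjoint.domain.subtype
      = (LinearMap.range T.toFun)ᗮ := by
  ext y
  constructor
  · rintro ⟨z, hz, rfl⟩
    rw [Submodule.mem_orthogonal']
    rintro _ ⟨x, rfl⟩
    have h := LinearPMap.adjoint_isFormalAdjoint hd z x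
    have hz' : T.adjoint z = 0 := hz
    rw [hz', inner_zero_left] at h
    exact h.symm
  · intro hy
    rw [Submodule.mem_orthogonal'] at hy
    have h0 : ∀ x : T.domain, ⟪(0 : E), (x : E)⟫_ℂ = ⟪y, T x⟫_ℂ := fun x => by
      rw [inner_zero_left]; exact (hy _ ⟨x, rfl⟩).symm
    have hm : y ∈ T.adjoint.domain := LinearPMap.mem_adjoint_domain_of_exists y ⟨0, h0⟩
    exact ⟨⟨y, hm⟩, LinearPMap.adjoint_apply_eq hd ⟨y, hm⟩ h0, rfl⟩

/-- For closed range, the cokernel is isomorphic to the kernel of the adjoint. -/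
lemma exists_coker_equiv (T : E →ₗ.[ℂ] F) (hd : Dense (T.domain : Set E))
    (hr : IsClosed ((LinearMap.range T.toFun : Submodule ℂ F) : Set F)) :
    Nonempty ((F ⧸ LinearMap.range T.toFun) ≃ₗ[ℂ] LinearMap.ker T.adjoint.toFun) := by
  have : CompleteSpace (LinearMap.range T.toFun) := hr.completeSpace_coe
  have e1 := Submodule.quotientEquivOfIsCompl _ _
    (Submodule.isCompl_orthogonal_of_hasOrthogonalProjection (K := LinearMap.range T.toFun))
  have e2 := Submodule.equivMapOfInjective T.adjoint.domain.subtype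
    (Submodule.injective_subtype _) (LinearMap.ker T.adjoint.toFun)
  exact ⟨e1.trans ((LinearEquiv.ofEq _ _ (adj_ker_map T hd).symm).trans e2.symm)⟩

lemma mem_pcomp_graph (T₁ : E →ₗ.[ℂ] F) (T₂ : F →ₗ.[ℂ] G) (f : E) (h : G) :
    (f, h) ∈ (pcomp T₂ T₁).graph ↔ ∃ g, (f, g) ∈ T₁.graph ∧ (g, h) ∈ T₂.graph := by
  have key : ∀ (x : T₁.domain) (hx : T₁ x ∈ T₂.domain),
      ∃ hm : (x : E) ∈ (pcomp T₂ T₁).domain, pcomp T₂ T₁ ⟨x, hm⟩ = T₂ ⟨T₁ x, hx⟩ := by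
    intro x hx
    have hm : (x : E) ∈ (pcomp T₂ T₁).domain := ⟨x, hx, rfl⟩
    refine ⟨hm, ?_⟩
    have : (Submodule.equivMapOfInjective T₁.domain.subtype (Submodule.injective_subtype _)
      (T₂.domain.comap T₁.toFun)).symm ⟨x, hm⟩ = ⟨x, hx⟩ := by
      rw [LinearEquiv.symm_apply_eq]; rfl
    change T₂.toFun ((T₁.toFun.restrict (p := T₂.domain.comap T₁.toFun) (q := T₂.domain)
      fun _ hx => hx) ((Submodule.equivMapOfInjective T₁.domain.subtype
        (Submodule.injective_subtype _) (T₂.domain.comap T₁.toFun)).symm ⟨x, hm⟩)) = _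
    rw [this]; rfl
  simp only [LinearPMap.mem_graph_iff]
  constructor
  · rintro ⟨y, rfl, rfl⟩
    obtain ⟨_, x, hx, rfl⟩ := y
    obtain ⟨hm, e⟩ := key x hx
    exact ⟨T₁ x, ⟨x, rfl, rfl⟩, ⟨T₁ x, hx⟩, rfl, e.symm⟩
  · rintro ⟨_, ⟨x, rfl, rfl⟩, ⟨y, hy⟩, rfl, rfl⟩
    obtain ⟨hm, e⟩ := key x hy
    exact ⟨⟨x, hm⟩, rfl, e⟩

lemma mem_range_iff_graph (T : E →ₗ.[ℂ] F) (h : F) :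
    h ∈ LinearMap.range T.toFun ↔ ∃ f, (f, h) ∈ T.graph := by
  constructor
  · rintro ⟨x, rfl⟩
    exact ⟨x, T.mem_graph x⟩
  · rintro ⟨f, hf⟩
    obtain ⟨x, rfl, hx⟩ := (LinearPMap.mem_graph_iff _).1 hf
    exact ⟨x, hx⟩

/-- The second projection of the graph onto the range is an open quotient map. -/
lemma graph_snd_open (T : E →ₗ.[ℂ] F) (hc : T.IsClosed)
    (hr : IsClosed ((LinearMap.range T.toFun : Submodule ℂ F) : Set F)) :
    ∃ p : T.graph → LinearMap.range T.toFun, IsOpenQuotientMap p ∧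
      ∀ x : T.graph, (p x : F) = (x : E × F).2 := by
  have : CompleteSpace (LinearMap.range T.toFun) := hr.completeSpace_coe
  have : CompleteSpace T.graph := IsClosed.completeSpace_coe (hs := hc)
  let p : T.graph →L[ℂ] LinearMap.range T.toFun :=
    ((ContinuousLinearMap.snd ℂ E F).comp T.graph.subtypeL).codRestrict _
      (fun x => (mem_range_iff_graph T _).2 ⟨(x : E × F).1, x.2⟩)
  have hs : Function.Surjective p := by
    rintro ⟨h, hh⟩
    obtain ⟨f, hf⟩ := (mem_range_iff_graph T _).1 hh
    exact ⟨⟨(f, h), hf⟩, rfl⟩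
  exact ⟨p, ⟨hs, p.continuous, p.isOpenMap hs⟩, fun _ => rfl⟩

lemma closed_relation {X : Type*} [TopologicalSpace X] (T : E →ₗ.[ℂ] F) (hc : T.IsClosed)
    (hr : IsClosed ((LinearMap.range T.toFun : Submodule ℂ F) : Set F))
    (A : Set (X × E)) (hA : IsClosed A)
    (hinv : ∀ x g k, (k, (0 : F)) ∈ T.graph → (x, g) ∈ A → (x, g + k) ∈ A) :
    IsClosed {z : X × F | ∃ g, (g, z.2) ∈ T.graph ∧ (z.1, g) ∈ A} := by
  obtain ⟨p, hp, hpv⟩ := graph_snd_open T hc hr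
  have hq : IsOpenQuotientMap (Prod.map (id : X → X) p) := IsOpenQuotientMap.id.prodMap hp
  let S : Set (X × LinearMap.range T.toFun) :=
    {z | ∃ g, (g, (z.2 : F)) ∈ T.graph ∧ (z.1, g) ∈ A}
  have hS : IsClosed S := by
    rw [← hq.isQuotientMap.isClosed_preimage]
    have : Prod.map (id : X → X) p ⁻¹' S
        = (fun w : X × T.graph => (w.1, (w.2 : E × F).1)) ⁻¹' A := by
      ext ⟨x, ⟨⟨g, h⟩, hg⟩⟩
      have e := hpv ⟨(g, h), hg⟩
      simp only [S, Set.mem_preimage, Set.mem_setOf_eq, Prod.map, e, id]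
      constructor
      · rintro ⟨g', hg', hA'⟩
        have hk := T.graph.sub_mem hg hg'
        simp only [Prod.mk_sub_mk, sub_self] at hk
        simpa using hinv _ _ _ hk hA'
      · intro h; exact ⟨g, hg, h⟩
    rw [this]
    exact hA.preimage (by fun_prop)
  have he : Topology.IsClosedEmbedding (Prod.map (id : X → X)
      (Subtype.val : LinearMap.range T.toFun → F)) :=
    Topology.IsClosedEmbedding.id.prodMap hr.isClosedEmbedding_subtypeVal
  convert he.isClosedMap _ hS using 1
  ext ⟨x, h⟩
  constructor
  · rintro ⟨g, hg, hA'⟩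
    exact ⟨(x, ⟨h, (mem_range_iff_graph T _).2 ⟨g, hg⟩⟩), ⟨g, hg, hA'⟩, rfl⟩
  · rintro ⟨⟨x', h'⟩, ⟨g, hg, hA'⟩, e⟩
    obtain ⟨rfl, rfl⟩ := Prod.mk.inj e
    exact ⟨g, hg, hA'⟩

lemma dense_inter_aux (D R : Submodule ℂ F) (hD : Dense (D : Set F))
    (hR : IsClosed (R : Set F)) [FiniteDimensional ℂ (F ⧸ R)] :
    Function.Surjective (R.mkQ ∘ₗ D.subtype) ∧
      (R : Set F) ⊆ closure ((D : Set F) ∩ R) := by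
  have hcl : IsClosed (R : Set F) := hR
  have hs : Function.Surjective (R.mkQ ∘ₗ D.subtype) := by
    rw [← LinearMap.range_eq_top]
    have hd : Dense ((LinearMap.range (R.mkQ ∘ₗ D.subtype) : Submodule ℂ (F ⧸ R)) :
        Set (F ⧸ R)) := by
      have h1 : Dense (R.mkQ '' (D : Set F)) :=
        (R.mkQ_surjective.denseRange).dense_image continuous_quot_mk hD
      refine h1.mono ?_
      rintro _ ⟨x, hx, rfl⟩
      exact ⟨⟨x, hx⟩, rfl⟩
    have hc := Submodule.closed_of_finiteDimensional (LinearMap.range (R.mkQ ∘ₗ D.subtype))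
    apply SetLike.coe_injective
    rw [← hc.closure_eq, hd.closure_eq]; rfl
  refine ⟨hs, ?_⟩
  obtain ⟨s, hs'⟩ := (R.mkQ ∘ₗ D.subtype).exists_rightInverse_of_surjective
    (LinearMap.range_eq_top.2 hs)
  have hsv : ∀ q, R.mkQ (s q : F) = q := fun q => LinearMap.congr_fun hs' q
  let t : (F ⧸ R) →ₗ[ℂ] F := D.subtype ∘ₗ s
  have ht : Continuous t := LinearMap.continuous_of_finiteDimensional t
  have hp : Continuous (fun x : F => x - t (R.mkQ x)) :=
    continuous_id.sub (ht.comp continuous_quot_mk)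
  intro x hx
  have hx0 : R.mkQ x = 0 := by simpa using hx
  have hm : x - t (R.mkQ x) ∈ closure ((fun x : F => x - t (R.mkQ x)) '' (D : Set F)) :=
    image_closure_subset_closure_image hp ⟨x, hD x, rfl⟩
  rw [hx0, map_zero, sub_zero] at hm
  refine closure_mono ?_ hm
  rintro _ ⟨y, hy, rfl⟩
  refine ⟨D.sub_mem hy (s _).2, ?_⟩
  have : R.mkQ (y - t (R.mkQ y)) = 0 := by
    rw [map_sub]; exact sub_eq_zero.2 (hsv _).symm
  exact (Submodule.Quotient.mk_eq_zero R).1 this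

/-- Density of the domain of the product. -/
lemma dense_pcomp (T₁ : E →ₗ.[ℂ] F) (T₂ : F →ₗ.[ℂ] G)
    (hd : Dense (T₁.domain : Set E)) (hc : T₁.IsClosed)
    (hr : IsClosed ((LinearMap.range T₁.toFun : Submodule ℂ F) : Set F))
    (hD : (LinearMap.range T₁.toFun : Set F) ⊆
      closure ((T₂.domain : Set F) ∩ LinearMap.range T₁.toFun)) :
    Dense ((pcomp T₂ T₁).domain : Set E) := by
  obtain ⟨p, hp, hpv⟩ := graph_snd_open T₁ hc hr
  have h1 : Dense (Subtype.val ⁻¹' (T₂.domain : Set F) : Set (LinearMap.range T₁.toFun)) := by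
    intro x
    rw [closure_subtype]
    refine closure_mono ?_ (hD x.2)
    rintro y ⟨hy, hy'⟩
    exact ⟨⟨y, hy'⟩, hy, rfl⟩
  have h2 := hp.dense_preimage_iff.2 h1
  have h3 : DenseRange (fun z : T₁.graph => (z : E × F).1) := by
    refine hd.mono ?_
    intro x hx
    exact ⟨⟨_, T₁.mem_graph ⟨x, hx⟩⟩, rfl⟩
  refine (h3.dense_image (by fun_prop) h2).mono ?_
  rintro _ ⟨⟨⟨f, g⟩, hz⟩, hg, rfl⟩
  have hg' : g ∈ T₂.domain := by
    have := hpv ⟨(f, g), hz⟩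
    simp only [Set.mem_preimage, this] at hg
    exact hg
  have := (mem_pcomp_graph T₁ T₂ f (T₂ ⟨g, hg'⟩)).2 ⟨g, hz, T₂.mem_graph ⟨g, hg'⟩⟩
  obtain ⟨x, hx, _⟩ := (LinearPMap.mem_graph_iff _).1 this
  have := x.2
  rwa [hx] at this

/-- The kernel of `T` as a submodule of the ambient space. -/
lemma mem_ker_map (T : E →ₗ.[ℂ] F) (k : E) :
    k ∈ (LinearMap.ker T.toFun).map T.domain.subtype ↔ (k, (0 : F)) ∈ T.graph := by
  rw [LinearPMap.mem_graph_iff]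
  constructor
  · rintro ⟨x, hx, rfl⟩
    exact ⟨x, rfl, hx⟩
  · rintro ⟨x, rfl, hx⟩
    exact ⟨x, hx, rfl⟩

lemma closed_pcomp (T₁ : E →ₗ.[ℂ] F) (T₂ : F →ₗ.[ℂ] G)
    (hc₁ : T₁.IsClosed) (hc : T₂.IsClosed)
    (hr₁ : IsClosed ((LinearMap.range T₁.toFun : Submodule ℂ F) : Set F))
    (hr : IsClosed ((LinearMap.range T₂.toFun : Submodule ℂ G) : Set G))
    [FiniteDimensional ℂ (LinearMap.ker T₂.toFun)] :
    (pcomp T₂ T₁).IsClosed ∧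
      IsClosed ((LinearMap.range (pcomp T₂ T₁).toFun : Submodule ℂ G) : Set G) := by
  let K := (LinearMap.ker T₂.toFun).map T₂.domain.subtype
  have hK : ∀ k, k ∈ K ↔ (k, (0 : G)) ∈ T₂.graph := mem_ker_map T₂
  have absorb : ∀ g k h, (g, h) ∈ T₂.graph → k ∈ K → (g + k, h) ∈ T₂.graph := by
    intro g k h hg hk
    simpa using T₂.graph.add_mem hg ((hK k).1 hk)
  constructor
  · let K' : Submodule ℂ (E × F) := K.map (LinearMap.inr ℂ E F)
    have hA : IsClosed ((T₁.graph ⊔ K' : Submodule ℂ (E × F)) : Set (E × F)) :=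
      Submodule.isClosed_sup_finiteDimensional _ _ hc₁
    have := closed_relation T₂ hc hr _ hA (by
      intro x g k hk hx
      have h2 : ((0 : E), k) ∈ K' := ⟨k, (hK k).2 hk, rfl⟩
      simpa using (T₁.graph ⊔ K').add_mem hx ((le_sup_right : K' ≤ T₁.graph ⊔ K') h2))
    unfold LinearPMap.IsClosed
    convert this using 1
    ext ⟨f, h⟩
    rw [SetLike.mem_coe, mem_pcomp_graph]
    constructor
    · rintro ⟨g, h1, h2⟩
      exact ⟨g, h2, (le_sup_left : T₁.graph ≤ T₁.graph ⊔ K') h1⟩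
    · rintro ⟨g, h2, h1⟩
      obtain ⟨⟨f', g'⟩, hy, _, ⟨k, hk, rfl⟩, e⟩ := Submodule.mem_sup.1 h1
      simp only [LinearMap.inr_apply, Prod.mk_add_mk, add_zero, Prod.mk.injEq] at e
      obtain ⟨rfl, rfl⟩ := e
      refine ⟨g', hy, ?_⟩
      simpa using absorb _ _ _ h2 (K.neg_mem hk)
  · let R := LinearMap.range T₁.toFun
    have hA : IsClosed ((R ⊔ K : Submodule ℂ F) : Set F) :=
      Submodule.isClosed_sup_finiteDimensional _ _ hr₁
    have := closed_relation (X := Unit) T₂ hc hr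
      ((fun z : Unit × F => z.2) ⁻¹' ((R ⊔ K : Submodule ℂ F) : Set F))
      (hA.preimage continuous_snd) (by
      intro x g k hk hx
      exact (R ⊔ K).add_mem hx ((le_sup_right : K ≤ R ⊔ K) ((hK k).2 hk)))
    have := this.preimage (f := fun h : G => ((), h)) (by fun_prop)
    convert this using 1
    ext h
    rw [SetLike.mem_coe, mem_range_iff_graph]
    constructor
    · rintro ⟨f, hf⟩
      obtain ⟨g, h1, h2⟩ := (mem_pcomp_graph _ _ _ _).1 hf
      exact ⟨g, h2, (le_sup_left : R ≤ R ⊔ K) ((mem_range_iff_graph _ _).2 ⟨f, h1⟩)⟩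
    · rintro ⟨g, h2, h1⟩
      obtain ⟨y, hy, k, hk, e⟩ := Submodule.mem_sup.1 h1
      obtain ⟨f, hf⟩ := (mem_range_iff_graph T₁ y).1 hy
      refine ⟨f, (mem_pcomp_graph _ _ _ _).2 ⟨y, hf, ?_⟩⟩
      have := absorb _ _ _ h2 (K.neg_mem hk)
      have e' : g + -k = y := by
        change y + k = g at e
        rw [← e]; abel
      rwa [e'] at this

/-- The first factor of the product, with values in the domain of `T₂`. -/
def pfac (T₁ : E →ₗ.[ℂ] F) (T₂ : F →ₗ.[ℂ] G) : (pcomp T₂ T₁).domain →ₗ[ℂ] T₂.domain :=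
  (T₁.toFun.restrict (p := T₂.domain.comap T₁.toFun) (q := T₂.domain) fun _ hx => hx) ∘ₗ
    (Submodule.equivMapOfInjective T₁.domain.subtype (Submodule.injective_subtype _)
      (T₂.domain.comap T₁.toFun)).symm.toLinearMap

lemma pfac_apply (T₁ : E →ₗ.[ℂ] F) (T₂ : F →ₗ.[ℂ] G) (x : T₁.domain)
    (hx : T₁ x ∈ T₂.domain) (hm : (x : E) ∈ (pcomp T₂ T₁).domain) :
    pfac T₁ T₂ ⟨x, hm⟩ = ⟨T₁ x, hx⟩ := by
  have : (Submodule.equivMapOfInjective T₁.domain.subtype (Submodule.injective_subtype _)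
      (T₂.domain.comap T₁.toFun)).symm ⟨x, hm⟩ = ⟨x, hx⟩ := by
    rw [LinearEquiv.symm_apply_eq]; rfl
  change (T₁.toFun.restrict (p := T₂.domain.comap T₁.toFun) (q := T₂.domain)
      fun _ hx => hx) ((Submodule.equivMapOfInjective T₁.domain.subtype
        (Submodule.injective_subtype _) (T₂.domain.comap T₁.toFun)).symm ⟨x, hm⟩) = _
  rw [this]; rfl

lemma pfac_ker (T₁ : E →ₗ.[ℂ] F) (T₂ : F →ₗ.[ℂ] G) :
    Nonempty (LinearMap.ker (pfac T₁ T₂) ≃ₗ[ℂ] LinearMap.ker T₁.toFun) := by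
  have e1 := Submodule.equivMapOfInjective (pcomp T₂ T₁).domain.subtype
    (Submodule.injective_subtype _) (LinearMap.ker (pfac T₁ T₂))
  have e2 := Submodule.equivMapOfInjective T₁.domain.subtype
    (Submodule.injective_subtype _) (LinearMap.ker T₁.toFun)
  refine ⟨e1.trans ((LinearEquiv.ofEq _ _ ?_).trans e2.symm)⟩
  ext y
  constructor
  · rintro ⟨⟨_, x, hx, rfl⟩, h, rfl⟩
    have h' := pfac_apply T₁ T₂ x hx ⟨x, hx, rfl⟩
    refine ⟨x, ?_, rfl⟩
    exact congrArg Subtype.val (h'.symm.trans h)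
  · rintro ⟨x, hx, rfl⟩
    have h0 : T₁ x = 0 := hx
    have hx' : T₁ x ∈ T₂.domain := by rw [h0]; exact T₂.domain.zero_mem
    refine ⟨⟨x, ⟨x, hx', rfl⟩⟩, ?_, rfl⟩
    exact (pfac_apply T₁ T₂ x hx' _).trans (Subtype.ext h0)

lemma pfac_coker (T₁ : E →ₗ.[ℂ] F) (T₂ : F →ₗ.[ℂ] G)
    (hs : Function.Surjective ((LinearMap.range T₁.toFun).mkQ ∘ₗ T₂.domain.subtype)) :
    Nonempty ((T₂.domain ⧸ LinearMap.range (pfac T₁ T₂)) ≃ₗ[ℂ]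
      (F ⧸ LinearMap.range T₁.toFun)) := by
  have e := LinearMap.quotKerEquivOfSurjective _ hs
  refine ⟨(Submodule.quotEquivOfEq _ _ ?_).trans e⟩
  ext y
  rw [LinearMap.mem_ker, LinearMap.comp_apply, Submodule.mkQ_apply,
    Submodule.Quotient.mk_eq_zero]
  constructor
  · rintro ⟨⟨_, x, hx, rfl⟩, rfl⟩
    have h' := pfac_apply T₁ T₂ x hx ⟨x, hx, rfl⟩
    exact ⟨x, (congrArg Subtype.val h').symm⟩
  · rintro ⟨x, hx⟩
    have hx' : T₁ x ∈ T₂.domain := by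
      have : T₁ x = y := hx
      rw [this]; exact y.2
    exact ⟨⟨x, ⟨x, hx', rfl⟩⟩, (pfac_apply T₁ T₂ x hx' _).trans (Subtype.ext hx)⟩

lemma indP_eq (T : E →ₗ.[ℂ] F) (hd : Dense (T.domain : Set E))
    (hr : IsClosed ((LinearMap.range T.toFun : Submodule ℂ F) : Set F)) :
    indP T = T.toFun.index := by
  obtain ⟨e⟩ := exists_coker_equiv T hd hr
  rw [LinearMap.index_eq_finrank_sub, e.finrank_eq]; rfl

/-- The product of two Fredholm operators between complex Hilbert spaces is densely
defined, closed, and Fredholm, and `ind(T₂T₁) = ind(T₁) + ind(T₂)`. -/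
theorem fredholm_product_index (T₁ : E →ₗ.[ℂ] F) (T₂ : F →ₗ.[ℂ] G)
    (h₁ : IsFredholmP T₁) (h₂ : IsFredholmP T₂) :
    IsFredholmP (pcomp T₂ T₁) ∧ indP (pcomp T₂ T₁) = indP T₁ + indP T₂ := by
  obtain ⟨hd₁, hc₁, hr₁, hk₁, ha₁⟩ := h₁
  obtain ⟨hd₂, hc₂, hr₂, hk₂, ha₂⟩ := h₂
  obtain ⟨e₁⟩ := exists_coker_equiv T₁ hd₁ hr₁
  obtain ⟨e₂⟩ := exists_coker_equiv T₂ hd₂ hr₂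
  have i1 : FiniteDimensional ℂ (LinearMap.ker T₁.toFun) := Module.rank_lt_aleph0_iff.1 hk₁
  have i2 : FiniteDimensional ℂ (LinearMap.ker T₂.toFun) := Module.rank_lt_aleph0_iff.1 hk₂
  have i3 : FiniteDimensional ℂ (LinearMap.ker T₁.adjoint.toFun) :=
    Module.rank_lt_aleph0_iff.1 ha₁
  have i4 : FiniteDimensional ℂ (LinearMap.ker T₂.adjoint.toFun) :=
    Module.rank_lt_aleph0_iff.1 ha₂
  have i5 : FiniteDimensional ℂ (F ⧸ LinearMap.range T₁.toFun) := e₁.symm.finiteDimensional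
  have i6 : FiniteDimensional ℂ (G ⧸ LinearMap.range T₂.toFun) := e₂.symm.finiteDimensional
  obtain ⟨hs, hD⟩ := dense_inter_aux T₂.domain (LinearMap.range T₁.toFun) hd₂ hr₁
  have hd := dense_pcomp T₁ T₂ hd₁ hc₁ hr₁ hD
  obtain ⟨hc, hr⟩ := closed_pcomp T₁ T₂ hc₁ hc₂ hr₁ hr₂
  obtain ⟨ek⟩ := pfac_ker T₁ T₂
  obtain ⟨ec⟩ := pfac_coker T₁ T₂ hs
  obtain ⟨e⟩ := exists_coker_equiv (pcomp T₂ T₁) hd hr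
  have j1 : FiniteDimensional ℂ (LinearMap.ker (pfac T₁ T₂)) := ek.symm.finiteDimensional
  have j2 : FiniteDimensional ℂ (T₂.domain ⧸ LinearMap.range (pfac T₁ T₂)) :=
    ec.symm.finiteDimensional
  have hcomp : (pcomp T₂ T₁).toFun = T₂.toFun ∘ₗ pfac T₁ T₂ := rfl
  have k1 : FiniteDimensional ℂ (LinearMap.ker (pcomp T₂ T₁).toFun) := by
    rw [hcomp, LinearMap.ker_comp]; infer_instance
  have k2 : FiniteDimensional ℂ (G ⧸ LinearMap.range (pcomp T₂ T₁).toFun) := by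
    rw [hcomp, LinearMap.range_comp]; infer_instance
  have k3 : FiniteDimensional ℂ (LinearMap.ker (pcomp T₂ T₁).adjoint.toFun) :=
    e.finiteDimensional
  refine ⟨⟨hd, hc, hr, Module.rank_lt_aleph0_iff.2 k1, Module.rank_lt_aleph0_iff.2 k3⟩, ?_⟩
  have hidx : (pfac T₁ T₂).index = T₁.toFun.index := by
    rw [LinearMap.index_eq_finrank_sub, LinearMap.index_eq_finrank_sub, ek.finrank_eq,
      ec.finrank_eq]
  rw [indP_eq _ hd hr, indP_eq _ hd₁ hr₁, indP_eq _ hd₂ hr₂, hcomp, LinearMap.index_comp, hidx,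
    add_comm]
end
end

section
/- Let H₁, H₂, H₃ be complex Hilbert spaces, and let T₁ : dom(T₁) ⊆ H₁ → H₂ and T₂ : dom(T₂) ⊆ H₂ → H₃ be left semi-Fredholm operators (in particular densely defined and closed), and assume that T₂T₁ is densely defined in H₁. Then T₂T₁ is closed and left semi-Fredholm (it has closed range and finite-dimensional kernel), and the index formula holds in cardinal arithmetic: dim ker(T₂T₁) + dim ker(T₁*) + dim ker(T₂*) = dim ker(T₁) + dim ker(T₂) + dim ker((T₂T₁)*), where dim denotes the Hilbert-space dimension as a cardinal. -/
open scoped InnerProductSpace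
open Cardinal

noncomputable section

variable {E F G H : Type*}
  [NormedAddCommGroup E] [InnerProductSpace ℂ E] [CompleteSpace E]
  [NormedAddCommGroup F] [InnerProductSpace ℂ F] [CompleteSpace F]
  [NormedAddCommGroup G] [InnerProductSpace ℂ G] [CompleteSpace G]
  [NormedAddCommGroup H] [InnerProductSpace ℂ H] [CompleteSpace H]

universe u v w

theorem aux_rank_nullity {M : Type u} {N : Type v} [AddCommGroup M] [Module ℂ M]
    [AddCommGroup N] [Module ℂ N] (f : M →ₗ[ℂ] N) :
    Cardinal.lift.{max v w} (Module.rank ℂ M) =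
      Cardinal.lift.{max v w} (Module.rank ℂ (LinearMap.ker f)) +
      Cardinal.lift.{max u w} (Module.rank ℂ (LinearMap.range f)) := by
  have h := congrArg Cardinal.lift.{w} (LinearMap.lift_rank_range_add_rank_ker f)
  simp only [Cardinal.lift_add, Cardinal.lift_lift] at h
  rw [← h, add_comm]

theorem aux_index {C : Type u} {D : Type v} {G : Type w} [AddCommGroup C] [Module ℂ C]
    [AddCommGroup D] [Module ℂ D] [AddCommGroup G] [Module ℂ G]
    (s : C →ₗ[ℂ] D) (t : D →ₗ[ℂ] G) :
    Cardinal.lift.{max v w} (Module.rank ℂ (LinearMap.ker (t ∘ₗ s))) +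
      Cardinal.lift.{max u w} (Module.rank ℂ (D ⧸ LinearMap.range s)) +
      Cardinal.lift.{max u v} (Module.rank ℂ (G ⧸ LinearMap.range t)) =
    Cardinal.lift.{max v w} (Module.rank ℂ (LinearMap.ker s)) +
      Cardinal.lift.{max u w} (Module.rank ℂ (LinearMap.ker t)) +
      Cardinal.lift.{max u v} (Module.rank ℂ (G ⧸ LinearMap.range (t ∘ₗ s))) := by
  set I : Submodule ℂ D := LinearMap.range s ⊓ LinearMap.ker t with hI
  -- a
  have a := aux_rank_nullity.{u, v, w} (s ∘ₗ (LinearMap.ker (t ∘ₗ s)).subtype)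
  have a1 : LinearMap.range (s ∘ₗ (LinearMap.ker (t ∘ₗ s)).subtype) = I := by
    ext y
    simp only [LinearMap.mem_range, hI, Submodule.mem_inf, LinearMap.mem_ker]
    constructor
    · rintro ⟨x, rfl⟩
      exact ⟨⟨x, rfl⟩, x.2⟩
    · rintro ⟨⟨x, rfl⟩, h⟩
      exact ⟨⟨x, h⟩, rfl⟩
  have hle : LinearMap.ker s ≤ LinearMap.ker (t ∘ₗ s) := LinearMap.ker_le_ker_comp s t
  have a2 : Module.rank ℂ (LinearMap.ker (s ∘ₗ (LinearMap.ker (t ∘ₗ s)).subtype)) =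
      Module.rank ℂ (LinearMap.ker s) := by
    rw [LinearMap.ker_comp]
    exact (Submodule.comapSubtypeEquivOfLe hle).rank_eq
  rw [a1, a2] at a
  -- b
  have b := aux_rank_nullity.{v, v, max u w} ((LinearMap.range s).mkQ ∘ₗ (LinearMap.ker t).subtype)
  have b1 : Module.rank ℂ (LinearMap.ker ((LinearMap.range s).mkQ ∘ₗ (LinearMap.ker t).subtype)) =
      Module.rank ℂ I := by
    rw [LinearMap.ker_comp, Submodule.ker_mkQ]
    have : Submodule.comap (LinearMap.ker t).subtype (LinearMap.range s) =
       Submodule.comap (LinearMap.ker t).subtype I := by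
      ext x; simp [hI]
    rw [this]
    exact (Submodule.comapSubtypeEquivOfLe inf_le_right).rank_eq
  rw [b1, LinearMap.range_comp, Submodule.range_subtype] at b
  -- c
  have hst : LinearMap.range s ≤ (LinearMap.range (t ∘ₗ s)).comap t := by
    rintro _ ⟨x, rfl⟩
    exact ⟨x, rfl⟩
  have c := aux_rank_nullity.{v, w, u}
    ((LinearMap.range s).mapQ (LinearMap.range (t ∘ₗ s)) t hst)
  have c1 : LinearMap.ker ((LinearMap.range s).mapQ (LinearMap.range (t ∘ₗ s)) t hst) =
      (LinearMap.ker t).map (LinearMap.range s).mkQ := by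
    ext y
    obtain ⟨y, rfl⟩ := Submodule.mkQ_surjective _ y
    simp only [Submodule.mkQ_apply, LinearMap.mem_ker, Submodule.mapQ_apply,
      Submodule.Quotient.mk_eq_zero, Submodule.mem_map, LinearMap.mem_range, LinearMap.comp_apply]
    constructor
    · rintro ⟨x, hx⟩
      refine ⟨y - s x, by simp [hx], ?_⟩
      rw [Submodule.Quotient.eq]
      exact ⟨-x, by simp⟩
    · rintro ⟨z, hz, h⟩
      rw [Submodule.Quotient.eq] at h
      obtain ⟨x, hx⟩ := h
      refine ⟨-x, ?_⟩
      rw [map_neg, map_neg, hx, map_sub, hz]; simp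
  rw [c1] at c
  -- d
  have hts : LinearMap.range (t ∘ₗ s) ≤ (LinearMap.range t).comap LinearMap.id := by
    rintro _ ⟨x, rfl⟩
    exact ⟨s x, rfl⟩
  have d := aux_rank_nullity.{w, w, max u v}
    ((LinearMap.range (t ∘ₗ s)).mapQ (LinearMap.range t) LinearMap.id hts)
  have d1 : LinearMap.ker ((LinearMap.range (t ∘ₗ s)).mapQ (LinearMap.range t) LinearMap.id hts) =
      LinearMap.range ((LinearMap.range s).mapQ (LinearMap.range (t ∘ₗ s)) t hst) := by
    ext y
    obtain ⟨y, rfl⟩ := Submodule.mkQ_surjective _ y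
    simp only [Submodule.mkQ_apply, LinearMap.mem_ker, Submodule.mapQ_apply,
      Submodule.Quotient.mk_eq_zero, LinearMap.mem_range, LinearMap.id_apply]
    constructor
    · rintro ⟨x, rfl⟩
      exact ⟨Submodule.Quotient.mk x, by simp⟩
    · rintro ⟨z, h⟩
      obtain ⟨z, rfl⟩ := Submodule.mkQ_surjective _ z
      simp only [Submodule.mkQ_apply, Submodule.mapQ_apply] at h
      rw [Submodule.Quotient.eq] at h
      obtain ⟨x, hx⟩ := h
      refine ⟨z - s x, ?_⟩
      rw [map_sub]
      simp only [LinearMap.comp_apply] at hx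
      rw [hx]; abel
  have d2 : LinearMap.range ((LinearMap.range (t ∘ₗ s)).mapQ (LinearMap.range t)
      LinearMap.id hts) = ⊤ := by
    rw [LinearMap.range_eq_top]
    intro y
    obtain ⟨y, rfl⟩ := Submodule.mkQ_surjective _ y
    exact ⟨Submodule.Quotient.mk y, by simp⟩
  rw [d1, d2, rank_top] at d
  simp only [← Cardinal.lift_umax.{v, max u w}, ← Cardinal.lift_umax.{w, max u v}] at *
  rw [a, b, c, d]
  ring

theorem aux_isClosed_map {W Z : Type*} [NormedAddCommGroup W] [NormedSpace ℂ W] [CompleteSpace W]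
    [NormedAddCommGroup Z] [NormedSpace ℂ Z] [CompleteSpace Z] (A : W →L[ℂ] Z)
    (hA : IsClosed (LinearMap.range A.toLinearMap : Set Z))
    [FiniteDimensional ℂ (LinearMap.ker A.toLinearMap)]
    (L : Submodule ℂ W) (hL : IsClosed (L : Set W)) :
    IsClosed (L.map A.toLinearMap : Set Z) := by
  have : CompleteSpace (LinearMap.range A.toLinearMap) := hA.completeSpace_coe
  let B : W →L[ℂ] LinearMap.range A.toLinearMap := A.codRestrict _ (fun x => ⟨x, rfl⟩)
  have hB : Function.Surjective B := by
    rintro ⟨_, x, rfl⟩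
    exact ⟨x, rfl⟩
  have hq := B.isQuotientMap hB
  have hS : IsClosed (Subtype.val ⁻¹' (L.map A.toLinearMap : Set Z) :
      Set (LinearMap.range A.toLinearMap)) := by
    rw [← hq.isClosed_preimage]
    have := Submodule.isClosed_sup_finiteDimensional L (LinearMap.ker A.toLinearMap) hL
    rw [← Submodule.comap_map_eq] at this
    exact this
  have := hA.isClosedEmbedding_subtypeVal.isClosedMap _ hS
  convert this using 1
  ext z
  constructor
  · rintro ⟨x, hx, rfl⟩
    exact ⟨⟨A x, x, rfl⟩, ⟨x, hx, rfl⟩, rfl⟩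
  · rintro ⟨y, hy, rfl⟩
    exact hy

theorem aux_card_le {X : Type u} {Y : Type v}
    [NormedAddCommGroup X] [InnerProductSpace ℂ X]
    [NormedAddCommGroup Y] [InnerProductSpace ℂ Y]
    {ι : Type u} {κ : Type v} [Infinite ι] (b : HilbertBasis ι ℂ X) (c : HilbertBasis κ ℂ Y)
    (A : X →L[ℂ] Y) (hA : DenseRange A) : Cardinal.lift.{u} (Cardinal.mk κ) ≤ Cardinal.lift.{v} (Cardinal.mk ι) := by
  have hex : ∀ k : κ, ∃ i : ι, inner ℂ (c k) (A (b i)) ≠ 0 := by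
    intro k
    by_contra! h
    have h1 : ((innerSL ℂ (c k)) ∘L A) = 0 := by
      apply ContinuousLinearMap.ext_on (s := Set.range b)
      · exact Submodule.dense_iff_topologicalClosure_eq_top.mpr b.dense_span
      · rintro _ ⟨i, rfl⟩
        simpa using h i
    have h2 : (fun y => inner ℂ (c k) y) = fun _ => 0 := by
      refine hA.equalizer (by fun_prop) (by fun_prop) ?_
      ext x
      exact congrArg (fun f : X →L[ℂ] ℂ => f x) h1
    have h3 := congrFun h2 (c k)
    have h4 := c.orthonormal.ne_zero k
    simp only [inner_self_eq_zero] at h3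
    exact h4 h3
  have hcount : ∀ i : ι, {k : κ | inner ℂ (c k) (A (b i)) ≠ 0}.Countable := by
    intro i
    have := (c.orthonormal.inner_products_summable (A (b i))).countable_support
    refine this.mono ?_
    intro k hk
    simpa using hk
  have hU : (⋃ i : ι, {k : κ | inner ℂ (c k) (A (b i)) ≠ 0}) = Set.univ := by
    ext k; simpa using hex k
  have h := Cardinal.mk_iUnion_le_sum_mk_lift (f := fun i : ι => {k : κ | inner ℂ (c k) (A (b i)) ≠ 0})
  rw [hU, Cardinal.mk_univ] at h
  refine h.trans ?_
  refine (Cardinal.sum_le_sum _ (fun _ => ℵ₀) (fun i => ?_)).trans ?_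
  · exact Cardinal.mk_le_aleph0_iff.mpr (hcount i)
  · simp

theorem aux_hilbert_equiv {X : Type u} {Y : Type v}
    [NormedAddCommGroup X] [InnerProductSpace ℂ X] [CompleteSpace X]
    [NormedAddCommGroup Y] [InnerProductSpace ℂ Y] [CompleteSpace Y]
    (hX : ¬ FiniteDimensional ℂ X) (hY : ¬ FiniteDimensional ℂ Y)
    (A : X →L[ℂ] Y) (hA : DenseRange A) (hi : Function.Injective A) :
    Nonempty (X ≃ₗ[ℂ] Y) := by
  obtain ⟨ι, b, -⟩ := exists_hilbertBasis ℂ X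
  obtain ⟨κ, c, -⟩ := exists_hilbertBasis ℂ Y
  have hι : Infinite ι := by
    by_contra h
    rw [not_infinite_iff_finite] at h
    have := Fintype.ofFinite ι
    exact hX b.toOrthonormalBasis.toBasis.finiteDimensional_of_finite
  have hκ : Infinite κ := by
    by_contra h
    rw [not_infinite_iff_finite] at h
    have := Fintype.ofFinite κ
    exact hY c.toOrthonormalBasis.toBasis.finiteDimensional_of_finite
  have hA' : DenseRange (ContinuousLinearMap.adjoint A) := by
    have h : (LinearMap.range (ContinuousLinearMap.adjoint A).toLinearMap)ᗮ = ⊥ := by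
      rw [ContinuousLinearMap.orthogonal_range, ContinuousLinearMap.adjoint_adjoint]
      exact LinearMap.ker_eq_bot.mpr hi
    rw [← Submodule.topologicalClosure_eq_top_iff,
      ← Submodule.dense_iff_topologicalClosure_eq_top] at h
    exact h
  have h1 := aux_card_le b c A hA
  have h2 := aux_card_le c b _ hA'
  obtain ⟨e⟩ := Cardinal.lift_mk_eq'.mp (le_antisymm h2 h1)
  let c' : HilbertBasis ι ℂ Y := HilbertBasis.mk (v := c ∘ e)
    (c.orthonormal.comp e e.injective) (by
      rw [e.surjective.range_comp, c.dense_span])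
  exact ⟨(b.repr.trans c'.repr.symm).toLinearEquiv⟩

theorem aux_rank_range {W : Type u} {Y : Type v}
    [NormedAddCommGroup W] [InnerProductSpace ℂ W] [CompleteSpace W]
    [NormedAddCommGroup Y] [InnerProductSpace ℂ Y] [CompleteSpace Y]
    (A : W →L[ℂ] Y) (hA : DenseRange A) :
    Module.rank ℂ (LinearMap.range A.toLinearMap) = Module.rank ℂ Y := by
  by_cases hf : FiniteDimensional ℂ (LinearMap.range A.toLinearMap)
  · have h := Submodule.closed_of_finiteDimensional (LinearMap.range A.toLinearMap)
    have h2 : LinearMap.range A.toLinearMap = ⊤ := by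
      rw [← h.submodule_topologicalClosure_eq, ← Submodule.dense_iff_topologicalClosure_eq_top]
      exact hA
    rw [h2, rank_top]
  have hY : ¬ FiniteDimensional ℂ Y := fun h => hf inferInstance
  set K := LinearMap.ker A.toLinearMap with hK
  have hKc : IsClosed (K : Set W) := A.isClosed_ker
  have : CompleteSpace K := hKc.completeSpace_coe
  let B : Kᗮ →L[ℂ] Y := A ∘L Kᗮ.subtypeL
  have hBi : Function.Injective B := by
    rw [injective_iff_map_eq_zero]
    intro x hx
    have h1 : (x : W) ∈ K := hx
    have : (x : W) ∈ K ⊓ Kᗮ := ⟨h1, x.2⟩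
    rw [Submodule.inf_orthogonal_eq_bot] at this
    exact Subtype.ext this
  have hBr : LinearMap.range B.toLinearMap = LinearMap.range A.toLinearMap := by
    apply le_antisymm
    · rintro _ ⟨x, rfl⟩; exact ⟨x, rfl⟩
    · rintro _ ⟨x, rfl⟩
      obtain ⟨y, hy, z, hz, rfl⟩ := K.exists_add_mem_mem_orthogonal x
      refine ⟨⟨z, hz⟩, ?_⟩
      have : A y = 0 := hy
      simp [B, this]
  have hBd : DenseRange B := by
    have : Set.range B = Set.range A := congrArg (fun S : Submodule ℂ Y => (S : Set Y)) hBr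
    rw [DenseRange, this]; exact hA
  let e := LinearEquiv.ofInjective B.toLinearMap hBi
  have hX : ¬ FiniteDimensional ℂ Kᗮ := by
    intro h
    rw [← hBr] at hf
    exact hf (Module.Finite.equiv e)
  obtain ⟨g⟩ := aux_hilbert_equiv hX hY B hBd hBi
  rw [← hBr]
  exact (e.symm.trans g).rank_eq

theorem aux_ker_comp_finite {C : Type u} {D : Type v} {G : Type w} [AddCommGroup C] [Module ℂ C]
    [AddCommGroup D] [Module ℂ D] [AddCommGroup G] [Module ℂ G]
    (s : C →ₗ[ℂ] D) (t : D →ₗ[ℂ] G)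
    (hs : Module.rank ℂ (LinearMap.ker s) < ℵ₀) (ht : Module.rank ℂ (LinearMap.ker t) < ℵ₀) :
    Module.rank ℂ (LinearMap.ker (t ∘ₗ s)) < ℵ₀ := by
  have hf2 : FiniteDimensional ℂ (LinearMap.ker t) := Module.rank_lt_aleph0_iff.mp ht
  have hf3 : FiniteDimensional ℂ (LinearMap.ker s) := Module.rank_lt_aleph0_iff.mp hs
  have ha := aux_rank_nullity.{u, v, w} (s ∘ₗ (LinearMap.ker (t ∘ₗ s)).subtype)
  have hb1 : FiniteDimensional ℂ
      (LinearMap.ker (s ∘ₗ (LinearMap.ker (t ∘ₗ s)).subtype)) := by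
    rw [LinearMap.ker_comp]
    exact Module.Finite.equiv
      (Submodule.comapSubtypeEquivOfLe (LinearMap.ker_le_ker_comp s t)).symm
  have hb2 : FiniteDimensional ℂ
      (LinearMap.range (s ∘ₗ (LinearMap.ker (t ∘ₗ s)).subtype)) := by
    refine Submodule.finiteDimensional_of_le (S₂ := LinearMap.ker t) ?_
    rintro _ ⟨x, rfl⟩
    exact x.2
  rw [← Cardinal.lift_lt_aleph0.{u, max v w}, ha]
  exact Cardinal.add_lt_aleph0
    (Cardinal.lift_lt_aleph0.mpr (Module.rank_lt_aleph0_iff.mpr hb1))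
    (Cardinal.lift_lt_aleph0.mpr (Module.rank_lt_aleph0_iff.mpr hb2))

theorem aux_rank_ker_adjoint {E : Type u} {F : Type v}
    [NormedAddCommGroup E] [InnerProductSpace ℂ E] [CompleteSpace E]
    [NormedAddCommGroup F] [InnerProductSpace ℂ F] [CompleteSpace F]
    (T : E →ₗ.[ℂ] F) (hT : Dense (T.domain : Set E)) :
    Module.rank ℂ (LinearMap.ker T.adjoint.toFun) =
      Module.rank ℂ ((LinearMap.range T.toFun)ᗮ : Submodule ℂ F) := by
  have h : (LinearMap.ker T.adjoint.toFun).map T.adjoint.domain.subtype =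
      (LinearMap.range T.toFun)ᗮ := by
    ext y
    rw [Submodule.mem_orthogonal']
    constructor
    · rintro ⟨z, hz, rfl⟩ _ ⟨x, rfl⟩
      have h1 := LinearPMap.adjoint_isFormalAdjoint hT z x
      have h2 : T.adjoint z = 0 := hz
      rw [h2, inner_zero_left] at h1
      exact h1.symm
    · intro hy
      have hw : ∀ x : T.domain, ⟪(0 : E), (x : E)⟫_ℂ = ⟪y, T x⟫_ℂ := fun x => by
        rw [inner_zero_left]; exact (hy _ ⟨x, rfl⟩).symm
      have hd : y ∈ T.adjoint.domain := T.mem_adjoint_domain_of_exists y ⟨0, hw⟩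
      exact ⟨⟨y, hd⟩, LinearPMap.adjoint_apply_eq hT ⟨y, hd⟩ hw, rfl⟩
  rw [← h]
  exact (Submodule.equivMapOfInjective _ (Submodule.injective_subtype _) _).rank_eq

theorem aux_rank_quot {F : Type v}
    [NormedAddCommGroup F] [InnerProductSpace ℂ F] [CompleteSpace F]
    (R : Submodule ℂ F) (hR : IsClosed (R : Set F)) :
    Module.rank ℂ (F ⧸ R) = Module.rank ℂ (Rᗮ : Submodule ℂ F) := by
  have : CompleteSpace R := hR.completeSpace_coe
  exact (R.quotientEquivOfIsCompl Rᗮ R.isCompl_orthogonal).rank_eq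

theorem aux_mem_graph_pcomp {E F G : Type*}
    [NormedAddCommGroup E] [InnerProductSpace ℂ E]
    [NormedAddCommGroup F] [InnerProductSpace ℂ F]
    [NormedAddCommGroup G] [InnerProductSpace ℂ G]
    (T₂ : F →ₗ.[ℂ] G) (T₁ : E →ₗ.[ℂ] F) (x : E) (z : G) :
    (x, z) ∈ (pcomp T₂ T₁).graph ↔ ∃ y, (x, y) ∈ T₁.graph ∧ (y, z) ∈ T₂.graph := by
  have key : ∀ (a : T₁.domain) (ha : T₁.toFun a ∈ T₂.domain)
      (h : (a : E) ∈ (pcomp T₂ T₁).domain), (pcomp T₂ T₁) ⟨a, h⟩ = T₂ ⟨T₁.toFun a, ha⟩ := by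
    intro a ha h
    have : (Submodule.equivMapOfInjective T₁.domain.subtype (Submodule.injective_subtype _)
      (T₂.domain.comap T₁.toFun)).symm ⟨a, h⟩ = ⟨a, ha⟩ := by
      rw [LinearEquiv.symm_apply_eq]
      rfl
    change T₂.toFun ((T₁.toFun.restrict (p := T₂.domain.comap T₁.toFun) (q := T₂.domain)
      fun _ hx => hx) ((Submodule.equivMapOfInjective T₁.domain.subtype
      (Submodule.injective_subtype _) (T₂.domain.comap T₁.toFun)).symm ⟨a, h⟩)) = _
    rw [this]
    rfl
  simp only [LinearPMap.mem_graph_iff]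
  constructor
  · rintro ⟨⟨_, ⟨a, ha, rfl⟩⟩, rfl, h2⟩
    refine ⟨T₁ a, ⟨a, rfl, rfl⟩, ⟨T₁ a, ha⟩, rfl, ?_⟩
    rw [← h2]
    exact (key a ha _).symm
  · rintro ⟨_, ⟨a, rfl, rfl⟩, ⟨b, hb⟩, h1, h2⟩
    simp only at h1 h2
    subst h1
    exact ⟨⟨a, ⟨a, hb, rfl⟩⟩, rfl, (key a hb _).trans h2⟩

theorem aux_ker_snd_finite {F G : Type*}
    [NormedAddCommGroup F] [InnerProductSpace ℂ F]
    [NormedAddCommGroup G] [InnerProductSpace ℂ G]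
    (T : F →ₗ.[ℂ] G) (h : Module.rank ℂ (LinearMap.ker T.toFun) < ℵ₀) (V : Type*)
    [AddCommGroup V] [Module ℂ V] (f : V →ₗ[ℂ] F) (hf : Function.Injective f)
    (hg : ∀ x, (f x, (0 : G)) ∈ T.graph) : FiniteDimensional ℂ V := by
  have : FiniteDimensional ℂ (LinearMap.ker T.toFun) := Module.rank_lt_aleph0_iff.mp h
  have h2 : ∀ x, f x ∈ (LinearMap.ker T.toFun).map T.domain.subtype := by
    intro x
    obtain ⟨y, hy, h0⟩ := (LinearPMap.mem_graph_iff _).mp (hg x)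
    exact ⟨y, h0, hy⟩
  exact Module.Finite.of_injective (f.codRestrict _ h2) (fun a b hab => hf (by
    simpa using congrArg Subtype.val hab))

theorem aux_pcomp_closed {E F G : Type*}
    [NormedAddCommGroup E] [InnerProductSpace ℂ E] [CompleteSpace E]
    [NormedAddCommGroup F] [InnerProductSpace ℂ F] [CompleteSpace F]
    [NormedAddCommGroup G] [InnerProductSpace ℂ G] [CompleteSpace G]
    (T₁ : E →ₗ.[ℂ] F) (T₂ : F →ₗ.[ℂ] G)
    (h₁ : IsLeftSemiFredholmP T₁) (h₂ : IsLeftSemiFredholmP T₂) :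
    (pcomp T₂ T₁).IsClosed := by
  obtain ⟨_, hc1, hr1, hk1⟩ := h₁
  obtain ⟨_, hc2, hr2, hk2⟩ := h₂
  have hc2' : IsClosed (T₂.graph : Set (F × G)) := hc2
  have : CompleteSpace T₂.graph := hc2'.completeSpace_coe
  let A : (E × T₂.graph) →L[ℂ] E × G :=
    (ContinuousLinearMap.id ℂ E).prodMap ((ContinuousLinearMap.snd ℂ F G) ∘L T₂.graph.subtypeL)
  have hA : IsClosed (LinearMap.range A.toLinearMap : Set (E × G)) := by
    have : (LinearMap.range A.toLinearMap : Set (E × G)) =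
        Prod.snd ⁻¹' (LinearMap.range T₂.toFun : Set G) := by
      ext ⟨x, z⟩
      constructor
      · rintro ⟨⟨a, ⟨⟨y, z'⟩, hp⟩⟩, h⟩
        obtain ⟨b, hb, hz⟩ := (LinearPMap.mem_graph_iff _).mp hp
        exact ⟨b, hz.trans (congrArg Prod.snd h)⟩
      · rintro ⟨b, hb⟩
        refine ⟨⟨x, ⟨(b, z), (LinearPMap.mem_graph_iff _).mpr ⟨b, rfl, hb⟩⟩⟩, rfl⟩
    rw [this]
    exact hr2.preimage continuous_snd
  have hfin : FiniteDimensional ℂ (LinearMap.ker A.toLinearMap) := by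
    have hk : ∀ p : LinearMap.ker A.toLinearMap, p.1.1 = 0 ∧ p.1.2.1.2 = 0 := by
      intro p
      have := p.2
      rw [LinearMap.mem_ker] at this
      exact ⟨congrArg Prod.fst this, congrArg Prod.snd this⟩
    refine aux_ker_snd_finite T₂ hk2 (LinearMap.ker A.toLinearMap)
      (LinearMap.fst ℂ F G ∘ₗ T₂.graph.subtype ∘ₗ LinearMap.snd ℂ E T₂.graph ∘ₗ
        (LinearMap.ker A.toLinearMap).subtype) ?_ ?_
    · intro p q hpq
      have hpq' : p.1.2.1.1 = q.1.2.1.1 := hpq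
      apply Subtype.ext
      apply Prod.ext
      · rw [(hk p).1, (hk q).1]
      · apply Subtype.ext
        apply Prod.ext hpq'
        rw [(hk p).2, (hk q).2]
    · intro p
      have := p.1.2.2
      have h3 : (p.1.2.1 : F × G) = (p.1.2.1.1, 0) := Prod.ext rfl (hk p).2
      rw [h3] at this
      exact this
  let L : Submodule ℂ (E × T₂.graph) := T₁.graph.comap
    ((LinearMap.id : E →ₗ[ℂ] E).prodMap (LinearMap.fst ℂ F G ∘ₗ T₂.graph.subtype))
  have hL : IsClosed (L : Set (E × T₂.graph)) := by
    refine IsClosed.preimage (f := fun p : E × T₂.graph => (p.1, p.2.1.1)) ?_ hc1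
    fun_prop
  have := aux_isClosed_map A hA L hL
  have h3 : (pcomp T₂ T₁).graph = L.map A.toLinearMap := by
    ext ⟨x, z⟩
    rw [aux_mem_graph_pcomp]
    constructor
    · rintro ⟨y, hy1, hy2⟩
      exact ⟨⟨x, ⟨(y, z), hy2⟩⟩, hy1, rfl⟩
    · rintro ⟨⟨a, ⟨⟨y, z'⟩, hp⟩⟩, h, he⟩
      have e1 : a = x := congrArg Prod.fst he
      have e2 : z' = z := congrArg Prod.snd he
      subst e1 e2
      exact ⟨y, h, hp⟩
  rw [LinearPMap.IsClosed, h3]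
  exact this

theorem aux_mem_range {E F : Type*} [AddCommGroup E] [Module ℂ E] [AddCommGroup F] [Module ℂ F]
    (T : E →ₗ.[ℂ] F) (y : F) : y ∈ LinearMap.range T.toFun ↔ ∃ x, (x, y) ∈ T.graph := by
  simp only [LinearPMap.mem_graph_iff, LinearMap.mem_range]
  constructor
  · rintro ⟨x, hx⟩
    exact ⟨x, x, rfl, hx⟩
  · rintro ⟨_, x, _, hx⟩
    exact ⟨x, hx⟩

theorem aux_pcomp_range {E F G : Type*}
    [NormedAddCommGroup E] [InnerProductSpace ℂ E] [CompleteSpace E]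
    [NormedAddCommGroup F] [InnerProductSpace ℂ F] [CompleteSpace F]
    [NormedAddCommGroup G] [InnerProductSpace ℂ G] [CompleteSpace G]
    (T₁ : E →ₗ.[ℂ] F) (T₂ : F →ₗ.[ℂ] G)
    (h₁ : IsLeftSemiFredholmP T₁) (h₂ : IsLeftSemiFredholmP T₂) :
    IsClosed (LinearMap.range (pcomp T₂ T₁).toFun : Set G) := by
  obtain ⟨_, hc1, hr1, hk1⟩ := h₁
  obtain ⟨_, hc2, hr2, hk2⟩ := h₂
  have hc2' : IsClosed (T₂.graph : Set (F × G)) := hc2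
  have : CompleteSpace T₂.graph := hc2'.completeSpace_coe
  let A : T₂.graph →L[ℂ] G := (ContinuousLinearMap.snd ℂ F G) ∘L T₂.graph.subtypeL
  have hA : LinearMap.range A.toLinearMap = LinearMap.range T₂.toFun := by
    ext z
    rw [aux_mem_range]
    constructor
    · rintro ⟨⟨⟨y, z'⟩, hp⟩, rfl⟩
      exact ⟨y, hp⟩
    · rintro ⟨y, hp⟩
      exact ⟨⟨(y, z), hp⟩, rfl⟩
  have hfin : FiniteDimensional ℂ (LinearMap.ker A.toLinearMap) := by
    have hk : ∀ p : LinearMap.ker A.toLinearMap, p.1.1.2 = 0 := fun p => p.2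
    refine aux_ker_snd_finite T₂ hk2 (LinearMap.ker A.toLinearMap)
      (LinearMap.fst ℂ F G ∘ₗ T₂.graph.subtype ∘ₗ (LinearMap.ker A.toLinearMap).subtype) ?_ ?_
    · intro p q hpq
      have hpq' : p.1.1.1 = q.1.1.1 := hpq
      apply Subtype.ext
      apply Subtype.ext
      apply Prod.ext hpq'
      rw [hk p, hk q]
    · intro p
      have := p.1.2
      have h3 : (p.1.1 : F × G) = (p.1.1.1, 0) := Prod.ext rfl (hk p)
      rw [h3] at this
      exact this
  let L : Submodule ℂ T₂.graph := (LinearMap.range T₁.toFun).comap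
    (LinearMap.fst ℂ F G ∘ₗ T₂.graph.subtype)
  have hL : IsClosed (L : Set T₂.graph) := by
    refine IsClosed.preimage (f := fun p : T₂.graph => p.1.1) ?_ hr1
    fun_prop
  have := aux_isClosed_map A (by rw [hA]; exact hr2) L hL
  convert this using 2
  ext z
  rw [aux_mem_range]
  simp only [aux_mem_graph_pcomp]
  constructor
  · rintro ⟨x, y, hy1, hy2⟩
    exact ⟨⟨(y, z), hy2⟩, (aux_mem_range _ _).mpr ⟨x, hy1⟩, rfl⟩
  · rintro ⟨⟨⟨y, z'⟩, hp⟩, h, rfl⟩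
    obtain ⟨x, hx⟩ := (aux_mem_range _ _).mp h
    exact ⟨x, y, hx, hp⟩

/-- The key codimension fact: `dim dom T / (R ∩ dom T) = dim Rᗮ` for closed `R`. -/
theorem aux_codim_domain {F : Type v} {G : Type w}
    [NormedAddCommGroup F] [InnerProductSpace ℂ F] [CompleteSpace F]
    [NormedAddCommGroup G] [InnerProductSpace ℂ G] [CompleteSpace G]
    (T : F →ₗ.[ℂ] G) (hd : Dense (T.domain : Set F)) (hc : T.IsClosed)
    (R : Submodule ℂ F) (hR : IsClosed (R : Set F)) :
    Module.rank ℂ (T.domain ⧸ R.comap T.domain.subtype) =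
      Module.rank ℂ (Rᗮ : Submodule ℂ F) := by
  have : CompleteSpace R := hR.completeSpace_coe
  let Γ : Submodule ℂ (WithLp 2 (F × G)) :=
    T.graph.comap (WithLp.linearEquiv 2 ℂ (F × G)).toLinearMap
  have hΓ : IsClosed (Γ : Set (WithLp 2 (F × G))) := by
    refine IsClosed.preimage (f := fun p : WithLp 2 (F × G) => p.ofLp) ?_ hc
    exact WithLp.prod_continuous_ofLp 2 F G
  have : CompleteSpace Γ := hΓ.completeSpace_coe
  let P : F →L[ℂ] Rᗮ := Rᗮ.orthogonalProjectionOnto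
  have hPs : Function.Surjective P := fun y => ⟨y, by simp [P]⟩
  let A : Γ →L[ℂ] Rᗮ := P ∘L (WithLp.fstL 2 ℂ F G) ∘L Γ.subtypeL
  have hr : LinearMap.range A.toLinearMap = LinearMap.range (P.toLinearMap ∘ₗ T.domain.subtype) := by
    ext z
    constructor
    · rintro ⟨⟨p, hp⟩, rfl⟩
      obtain ⟨b, hb, _⟩ := (LinearPMap.mem_graph_iff _).mp hp
      exact ⟨b, congrArg P hb⟩
    · rintro ⟨b, rfl⟩
      exact ⟨⟨WithLp.toLp 2 ((b : F), T b), (LinearPMap.mem_graph_iff _).mpr ⟨b, rfl, rfl⟩⟩, rfl⟩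
  have hA : DenseRange A := by
    have h1 : Dense (P '' (T.domain : Set F)) :=
      hPs.denseRange.dense_image P.continuous hd
    have h2 : Set.range A = P '' (T.domain : Set F) := by
      have := congrArg (fun S : Submodule ℂ Rᗮ => (S : Set Rᗮ)) hr
      refine this.trans ?_
      ext z
      constructor
      · rintro ⟨b, rfl⟩; exact ⟨b, b.2, rfl⟩
      · rintro ⟨b, hb, rfl⟩; exact ⟨⟨b, hb⟩, rfl⟩
    rw [DenseRange, h2]; exact h1
  rw [← aux_rank_range A hA, hr]
  have hker : R.comap T.domain.subtype = LinearMap.ker (P.toLinearMap ∘ₗ T.domain.subtype) := by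
    rw [LinearMap.ker_comp]
    congr 1
    ext x
    have := Submodule.orthogonalProjectionOnto_eq_zero_iff (K := Rᗮ) (v := x)
    rw [Submodule.orthogonal_orthogonal] at this
    exact this.symm
  rw [hker]
  exact (LinearMap.quotKerEquivRange _).rank_eq

/-- The product of two left semi-Fredholm operators, if densely defined, is closed and
left semi-Fredholm, and the index formula holds in cardinal arithmetic:
`dim ker(T₂T₁) + dim ker T₁* + dim ker T₂* = dim ker T₁ + dim ker T₂ + dim ker (T₂T₁)*`. -/
theorem left_semiFredholm_product_index {E : Type u} {F : Type v} {G : Type w}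
    [NormedAddCommGroup E] [InnerProductSpace ℂ E] [CompleteSpace E]
    [NormedAddCommGroup F] [InnerProductSpace ℂ F] [CompleteSpace F]
    [NormedAddCommGroup G] [InnerProductSpace ℂ G] [CompleteSpace G]
    (T₁ : E →ₗ.[ℂ] F) (T₂ : F →ₗ.[ℂ] G)
    (h₁ : IsLeftSemiFredholmP T₁) (h₂ : IsLeftSemiFredholmP T₂)
    (hdense : Dense (((pcomp T₂ T₁).domain : Submodule ℂ E) : Set E)) :
    (pcomp T₂ T₁).IsClosed ∧ IsLeftSemiFredholmP (pcomp T₂ T₁) ∧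
      Cardinal.lift.{max v w} (Module.rank ℂ (LinearMap.ker (pcomp T₂ T₁).toFun)) +
        Cardinal.lift.{max u w} (Module.rank ℂ (LinearMap.ker T₁.adjoint.toFun)) +
        Cardinal.lift.{max u v} (Module.rank ℂ (LinearMap.ker T₂.adjoint.toFun)) =
      Cardinal.lift.{max v w} (Module.rank ℂ (LinearMap.ker T₁.toFun)) +
        Cardinal.lift.{max u w} (Module.rank ℂ (LinearMap.ker T₂.toFun)) +
        Cardinal.lift.{max u v} (Module.rank ℂ (LinearMap.ker (pcomp T₂ T₁).adjoint.toFun)) := by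
  have hcl := aux_pcomp_closed T₁ T₂ h₁ h₂
  have hrc := aux_pcomp_range T₁ T₂ h₁ h₂
  obtain ⟨hd1, hc1, hr1, hk1⟩ := h₁
  obtain ⟨hd2, hc2, hr2, hk2⟩ := h₂
  let C := T₂.domain.comap T₁.toFun
  let s : C →ₗ[ℂ] T₂.domain :=
    T₁.toFun.restrict (p := T₂.domain.comap T₁.toFun) (q := T₂.domain) fun _ hx => hx
  let e : (pcomp T₂ T₁).domain ≃ₗ[ℂ] C :=
    (Submodule.equivMapOfInjective T₁.domain.subtype (Submodule.injective_subtype _)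
      (T₂.domain.comap T₁.toFun)).symm
  have hfac : (pcomp T₂ T₁).toFun = (T₂.toFun ∘ₗ s) ∘ₗ e.toLinearMap := rfl
  have hker : Module.rank ℂ (LinearMap.ker (pcomp T₂ T₁).toFun) =
      Module.rank ℂ (LinearMap.ker (T₂.toFun ∘ₗ s)) := by
    rw [hfac, LinearMap.ker_comp, Submodule.comap_equiv_eq_map_symm]
    exact (e.symm.submoduleMap _).rank_eq.symm
  have hran : LinearMap.range (pcomp T₂ T₁).toFun = LinearMap.range (T₂.toFun ∘ₗ s) := by
    rw [hfac, LinearMap.range_comp_of_range_eq_top]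
    exact e.range
  have hks : Module.rank ℂ (LinearMap.ker s) = Module.rank ℂ (LinearMap.ker T₁.toFun) := by
    have h : LinearMap.ker s = (LinearMap.ker T₁.toFun).comap C.subtype := by
      ext x
      simp only [LinearMap.mem_ker, Submodule.mem_comap]
      exact Subtype.ext_iff
    rw [h]
    refine (Submodule.comapSubtypeEquivOfLe ?_).rank_eq
    intro x hx
    have hx' : T₁.toFun x = 0 := hx
    change T₁.toFun x ∈ T₂.domain
    rw [hx']
    exact zero_mem _
  have hrs : LinearMap.range s = (LinearMap.range T₁.toFun).comap T₂.domain.subtype := by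
    ext y
    constructor
    · rintro ⟨x, rfl⟩
      exact ⟨x, rfl⟩
    · rintro ⟨x, hx⟩
      refine ⟨⟨x, ?_⟩, Subtype.ext hx⟩
      change T₁.toFun x ∈ T₂.domain
      rw [hx]
      exact y.2
  have hidx := aux_index s T₂.toFun
  rw [← hker, ← hran, hks, hrs, aux_codim_domain T₂ hd2 hc2 _ hr1, aux_rank_quot _ hr2,
    aux_rank_quot _ hrc, ← aux_rank_ker_adjoint T₁ hd1, ← aux_rank_ker_adjoint T₂ hd2,
    ← aux_rank_ker_adjoint _ hdense] at hidx
  refine ⟨hcl, ⟨hdense, hcl, hrc, ?_⟩, hidx⟩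
  rw [hker]
  exact aux_ker_comp_finite s T₂.toFun (hks.trans_lt hk1) hk2
end
end

section
/- Let S be a densely defined, closed, symmetric operator in a complex Hilbert space H whose deficiency indices n₊(S) = dim ker(S* − i) and n₋(S) = dim ker(S* + i) are both finite. Then for every k ∈ ℕ, k ≥ 1, the power S^{2k} is densely defined, symmetric, and closed, it satisfies ‖S^{2k}f + f‖ ≥ ‖f‖ for all f ∈ dom(S^{2k}), and its deficiency indices are n₊(S^{2k}) = n₋(S^{2k}) = k·(n₊(S) + n₋(S)). -/
open scoped InnerProductSpace
open Cardinal

noncomputable section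

variable {E F G H : Type*}
  [NormedAddCommGroup E] [InnerProductSpace ℂ E] [CompleteSpace E]
  [NormedAddCommGroup F] [InnerProductSpace ℂ F] [CompleteSpace F]
  [NormedAddCommGroup G] [InnerProductSpace ℂ G] [CompleteSpace G]
  [NormedAddCommGroup H] [InnerProductSpace ℂ H] [CompleteSpace H]

/-- Domains of the powers of the restriction of `T` to `W`. -/
def DD (T : H →ₗ[ℂ] H) (W : Submodule ℂ H) : ℕ → Submodule ℂ H
  | 0 => ⊤
  | (m + 1) => W ⊓ (DD T W m).comap T

theorem mem_DD_succ (T : H →ₗ[ℂ] H) (W : Submodule ℂ H) (m : ℕ) (f : H) :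
    f ∈ DD T W (m + 1) ↔ f ∈ W ∧ T f ∈ DD T W m := Iff.rfl

theorem mem_DD_zero (T : H →ₗ[ℂ] H) (W : Submodule ℂ H) (f : H) :
    f ∈ DD T W 0 := trivial

theorem DD_one (T : H →ₗ[ℂ] H) (W : Submodule ℂ H) : DD T W 1 = W := by
  ext f
  rw [mem_DD_succ]
  exact ⟨fun h => h.1, fun h => ⟨h, mem_DD_zero _ _ _⟩⟩

theorem mem_DD_add (T : H →ₗ[ℂ] H) (W : Submodule ℂ H) (m n : ℕ) (f : H) :
    f ∈ DD T W (m + n) ↔ f ∈ DD T W m ∧ (T ^ m) f ∈ DD T W n := by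
  induction m generalizing f with
  | zero => simp [mem_DD_zero]
  | succ m ih =>
    rw [show m + 1 + n = (m + n) + 1 by ring, mem_DD_succ, mem_DD_succ, ih, pow_succ]
    simp [and_assoc]

theorem DD_anti_succ (T : H →ₗ[ℂ] H) (W : Submodule ℂ H) (m : ℕ) :
    DD T W (m + 1) ≤ DD T W m := fun f hf => ((mem_DD_add T W m 1 f).1 hf).1

theorem sub_mem_DD (T : H →ₗ[ℂ] H) (W : Submodule ℂ H) (m : ℕ) (c : ℂ) (f : H)
    (hf : f ∈ DD T W (m + 1)) : T f - c • f ∈ DD T W m :=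
  sub_mem ((mem_DD_succ T W m f).1 hf).2 (Submodule.smul_mem _ _ (DD_anti_succ T W m hf))

theorem mem_DD_of_sub (T : H →ₗ[ℂ] H) (W : Submodule ℂ H) (m : ℕ) (c : ℂ) (f : H)
    (hf : f ∈ W) (h : T f - c • f ∈ DD T W m) : f ∈ DD T W (m + 1) := by
  induction m with
  | zero => exact ⟨hf, trivial⟩
  | succ m ih =>
    have h1 := ih (DD_anti_succ T W m h)
    refine ⟨hf, ?_⟩
    have := add_mem h (Submodule.smul_mem _ c h1)
    simpa using this

/-- The polynomial with prescribed list of roots. -/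
def QQ (l : List ℂ) : Polynomial ℂ := (l.map (fun c => Polynomial.X - Polynomial.C c)).prod

theorem QQ_cons (c : ℂ) (l : List ℂ) :
    QQ (c :: l) = (Polynomial.X - Polynomial.C c) * QQ l := by simp [QQ]

theorem aeval_QQ_cons (T : H →ₗ[ℂ] H) (c : ℂ) (l : List ℂ) (f : H) :
    Polynomial.aeval T (QQ (c :: l)) f
      = T (Polynomial.aeval T (QQ l) f) - c • Polynomial.aeval T (QQ l) f := by
  simp [QQ_cons, Module.algebraMap_end_apply]

theorem aeval_QQ_cons' (T : H →ₗ[ℂ] H) (c : ℂ) (l : List ℂ) (f : H) :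
    Polynomial.aeval T (QQ (c :: l)) f
      = Polynomial.aeval T (QQ l) (T f - c • f) := by
  rw [QQ_cons, mul_comm]
  simp [Module.algebraMap_end_apply]

theorem aeval_QQ_mem (T : H →ₗ[ℂ] H) (W : Submodule ℂ H) (l : List ℂ) (n : ℕ) (f : H)
    (hf : f ∈ DD T W (l.length + n)) : Polynomial.aeval T (QQ l) f ∈ DD T W n := by
  induction l generalizing f with
  | nil => simpa [QQ] using hf
  | cons c l ih =>
    rw [aeval_QQ_cons']
    apply ih
    apply sub_mem_DD
    convert hf using 2
    simp; ring

theorem mem_DD_of_aeval (T : H →ₗ[ℂ] H) (W : Submodule ℂ H) (l : List ℂ) (n : ℕ) (f : H)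
    (hf : f ∈ DD T W l.length) (h : Polynomial.aeval T (QQ l) f ∈ DD T W n) :
    f ∈ DD T W (l.length + n) := by
  induction l generalizing f with
  | nil => simpa [QQ] using h
  | cons c l ih =>
    rw [aeval_QQ_cons'] at h
    have := mem_DD_of_sub T W _ c f hf.1 (ih _ (sub_mem_DD T W _ c f hf) h)
    convert this using 2
    simp; ring

/-- The subtracted operator. -/
def AA (T : H →ₗ[ℂ] H) (c : ℂ) : H →ₗ[ℂ] H := T - c • LinearMap.id

theorem AA_apply (T : H →ₗ[ℂ] H) (c : ℂ) (f : H) : AA T c f = T f - c • f := rfl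

/-- Ranges of the products. -/
def RR (T : H →ₗ[ℂ] H) (W : Submodule ℂ H) (l : List ℂ) : Submodule ℂ H :=
  (DD T W l.length).map (Polynomial.aeval T (QQ l))

theorem RR_cons (T : H →ₗ[ℂ] H) (W : Submodule ℂ H) (c : ℂ) (l : List ℂ) :
    RR T W (c :: l) = (W ⊓ RR T W l).map (AA T c) := by
  ext y
  simp only [RR, Submodule.mem_map, Submodule.mem_inf]
  constructor
  · rintro ⟨f, hf, rfl⟩
    refine ⟨Polynomial.aeval T (QQ l) f, ⟨?_, f, DD_anti_succ _ _ _ hf, rfl⟩, ?_⟩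
    · have := aeval_QQ_mem T W l 1 f hf
      rwa [DD_one] at this
    · rw [aeval_QQ_cons, AA_apply]
  · rintro ⟨_, ⟨hw, f, hf, rfl⟩, rfl⟩
    refine ⟨f, ?_, ?_⟩
    · apply mem_DD_of_aeval T W l 1 f hf
      rwa [DD_one]
    · rw [aeval_QQ_cons, AA_apply]

/-- Abstract hypotheses. -/
structure SymmData (T : H →ₗ[ℂ] H) (W : Submodule ℂ H) : Prop where
  dense : Dense (W : Set H)
  symm : ∀ f ∈ W, ∀ g ∈ W, ⟪T f, g⟫_ℂ = ⟪f, T g⟫_ℂ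
  closed : IsClosed {p : H × H | p.1 ∈ W ∧ T p.1 = p.2}

namespace SymmData

variable {T : H →ₗ[ℂ] H} {W : Submodule ℂ H}

theorem im_zero (h : SymmData T W) (f : H) (hf : f ∈ W) : (⟪T f, f⟫_ℂ).im = 0 := by
  have h1 := h.symm f hf f hf
  rw [← inner_conj_symm f (T f)] at h1
  exact Complex.conj_eq_iff_im.1 h1.symm

theorem bound (h : SymmData T W) (c : ℂ) (f : H) (hf : f ∈ W) :
    |c.im| * ‖f‖ ≤ ‖AA T c f‖ := by
  by_cases h0 : ‖f‖ = 0
  · rw [h0]; simp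
  have hpos : 0 < ‖f‖ := lt_of_le_of_ne (norm_nonneg _) (Ne.symm h0)
  have h1 : (⟪AA T c f, f⟫_ℂ).im = c.im * ‖f‖ ^ 2 := by
    rw [AA_apply, inner_sub_left, inner_smul_left, inner_self_eq_norm_sq_to_K, Complex.sub_im,
      h.im_zero f hf]
    simp only [Complex.coe_algebraMap, ← Complex.ofReal_pow, Complex.im_mul_ofReal]
    simp
  have h2 : |(⟪AA T c f, f⟫_ℂ).im| ≤ ‖AA T c f‖ * ‖f‖ :=
    (Complex.abs_im_le_norm _).trans (norm_inner_le_norm _ _)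
  rw [h1, abs_mul, abs_of_nonneg (sq_nonneg ‖f‖)] at h2
  nlinarith

theorem isom (h : SymmData T W) (c : ℂ) (hc : c.re = 0) (f : H) (hf : f ∈ W) :
    ‖AA T (-c) f‖ = ‖AA T c f‖ := by
  have h1 : RCLike.re ⟪T f, c • f⟫_ℂ = 0 := by
    rw [inner_smul_right]
    simp [h.im_zero f hf, hc]
  rw [AA_apply, AA_apply, neg_smul, sub_neg_eq_add,
    ← sq_eq_sq₀ (norm_nonneg _) (norm_nonneg _), @norm_add_sq ℂ, @norm_sub_sq ℂ, h1]
  simp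

theorem closed_map (h : SymmData T W) (c : ℂ) (hc : c.im ≠ 0) (K : Submodule ℂ H)
    (hK : IsClosed (K : Set H)) : IsClosed (((W ⊓ K).map (AA T c) : Submodule ℂ H) : Set H) := by
  apply IsSeqClosed.isClosed
  intro y y0 hy hlim
  choose x hx hxy using hy
  have hcpos : 0 < |c.im| := abs_pos.2 hc
  have hcau : CauchySeq x := by
    have hyc := hlim.cauchySeq
    rw [Metric.cauchySeq_iff] at hyc ⊢
    intro ε hε
    obtain ⟨N, hN⟩ := hyc (|c.im| * ε) (by positivity)
    refine ⟨N, fun m hm n hn => ?_⟩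
    have h1 := hN m hm n hn
    have h2 := h.bound c (x m - x n) (sub_mem (hx m).1 (hx n).1)
    rw [map_sub, hxy, hxy] at h2
    rw [dist_eq_norm] at h1 ⊢
    exact lt_of_mul_lt_mul_left (h2.trans_lt h1) hcpos.le
  obtain ⟨x0, hx0⟩ := cauchySeq_tendsto_of_complete hcau
  have hT : Filter.Tendsto (fun n => (x n, T (x n))) Filter.atTop
      (nhds (x0, y0 + c • x0)) := by
    refine hx0.prodMk_nhds ?_
    have : (fun n => T (x n)) = fun n => y n + c • x n := by
      ext n; rw [← hxy n, AA_apply]; simp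
    rw [this]
    exact hlim.add (hx0.const_smul c)
  have hm := h.closed.mem_of_tendsto hT (Filter.Eventually.of_forall fun n => ⟨(hx n).1, rfl⟩)
  refine ⟨x0, ⟨hm.1, ?_⟩, ?_⟩
  · exact hK.mem_of_tendsto hx0 (Filter.Eventually.of_forall fun n => (hx n).2)
  · rw [AA_apply, hm.2]; simp

theorem closed_range (h : SymmData T W) (c : ℂ) (hc : c.im ≠ 0) :
    IsClosed ((W.map (AA T c) : Submodule ℂ H) : Set H) := by
  have := h.closed_map c hc ⊤ isClosed_univ
  simpa using this

theorem inj (h : SymmData T W) (c : ℂ) (hc : c.im ≠ 0) (f : H) (hf : f ∈ W)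
    (h0 : AA T c f = 0) : f = 0 := by
  have := h.bound c f hf
  rw [h0, norm_zero] at this
  have h2 : 0 < |c.im| := abs_pos.2 hc
  have := norm_nonneg f
  exact norm_eq_zero.1 (by nlinarith)

theorem RR_closed (h : SymmData T W) (l : List ℂ) (hl : ∀ c ∈ l, c.im ≠ 0) :
    IsClosed (RR T W l : Set H) := by
  induction l with
  | nil =>
    have : RR T W [] = ⊤ := by
      ext y; simp only [RR, Submodule.mem_map, Submodule.mem_top, iff_true]
      exact ⟨y, mem_DD_zero _ _ _, by simp [QQ]⟩
    rw [this]; exact isClosed_univ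
  | cons c l ih =>
    rw [RR_cons]
    exact h.closed_map c (hl c (by simp)) _ (ih fun d hd => hl d (by simp [hd]))

theorem QQ_bound (h : SymmData T W) (l : List ℂ) (hl : ∀ c ∈ l, c.im ≠ 0) :
    ∃ C : ℝ, 0 < C ∧ ∀ f ∈ DD T W l.length, C * ‖f‖ ≤ ‖Polynomial.aeval T (QQ l) f‖ := by
  induction l with
  | nil => exact ⟨1, one_pos, fun f _ => by simp [QQ]⟩
  | cons c l ih =>
    obtain ⟨C, hC, hb⟩ := ih fun d hd => hl d (by simp [hd])
    have h2 : 0 < |c.im| := abs_pos.2 (hl c (by simp))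
    refine ⟨C * |c.im|, by positivity, fun f hf => ?_⟩
    rw [aeval_QQ_cons']
    refine le_trans ?_ (hb _ (sub_mem_DD T W _ c f hf))
    rw [mul_assoc]
    exact mul_le_mul_of_nonneg_left (h.bound c f hf.1) hC.le

end SymmData

/-- Dense subspaces surject onto finite-dimensional quotients by closed subspaces. -/
theorem dense_surj (D K : Submodule ℂ H) (hD : Dense (D : Set H)) (hK : IsClosed (K : Set H))
    [FiniteDimensional ℂ (H ⧸ K)] : D.map K.mkQ = ⊤ := by
  have : IsClosed (K : Set H) := hK
  have h1 : Dense ((D.map K.mkQ : Submodule ℂ (H ⧸ K)) : Set (H ⧸ K)) := by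
    rw [Submodule.map_coe]
    exact (Submodule.mkQ_surjective K).denseRange.dense_image K.mkQL.continuous hD
  have h2 : IsClosed ((D.map K.mkQ : Submodule ℂ (H ⧸ K)) : Set (H ⧸ K)) :=
    Submodule.closed_of_finiteDimensional _
  apply SetLike.coe_injective
  rw [← h2.closure_eq, h1.closure_eq]; rfl

theorem dense_inter (D K : Submodule ℂ H) (hD : Dense (D : Set H)) (hK : IsClosed (K : Set H))
    [FiniteDimensional ℂ (H ⧸ K)] (x : H) (hx : x ∈ K) (ε : ℝ) (hε : 0 < ε) :
    ∃ y ∈ D, y ∈ K ∧ ‖y - x‖ < ε := by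
  have : IsClosed (K : Set H) := hK
  have hs := dense_surj D K hD hK
  have hsurj : LinearMap.range (K.mkQ ∘ₗ D.subtype) = ⊤ := by
    rw [LinearMap.range_comp, Submodule.range_subtype, hs]
  obtain ⟨s, hs⟩ := LinearMap.exists_rightInverse_of_surjective _ hsurj
  have hs' : ∀ q, K.mkQ (s q : H) = q := fun q => LinearMap.congr_fun hs q
  have hcont : Continuous fun z : H => z - (s (K.mkQ z) : H) := by
    have h1 : Continuous (D.subtype ∘ₗ s) := LinearMap.continuous_of_finiteDimensional _
    exact continuous_id.sub (h1.comp K.mkQL.continuous)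
  have hPx : x - (s (K.mkQ x) : H) = x := by
    have : K.mkQ x = 0 := by simpa using hx
    rw [this]; simp
  obtain ⟨δ, hδ, hh⟩ := Metric.continuous_iff.1 hcont x ε hε
  obtain ⟨d, hd, hdx⟩ := hD.exists_dist_lt x hδ
  rw [dist_comm] at hdx
  have := hh d hdx
  rw [hPx, dist_eq_norm] at this
  refine ⟨_, sub_mem hd (s (K.mkQ d)).2, ?_, this⟩
  apply (Submodule.Quotient.mk_eq_zero K).1
  change K.mkQ _ = 0
  rw [map_sub, hs', sub_self]

/-- Additivity of codimension. -/
theorem codim_add (A : H →ₗ[ℂ] H) (W K : Submodule ℂ H) (hA : ∀ f ∈ W, A f = 0 → f = 0)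
    (hs : W.map K.mkQ = ⊤) :
    Module.rank ℂ (H ⧸ (W ⊓ K).map A) = Module.rank ℂ (H ⧸ W.map A) + Module.rank ℂ (H ⧸ K) := by
  set M := (W ⊓ K).map A with hM
  have hle : M ≤ W.map A := Submodule.map_mono inf_le_left
  set φ : W →ₗ[ℂ] H ⧸ M := M.mkQ ∘ₗ A ∘ₗ W.subtype with hφ
  set ψ : W →ₗ[ℂ] H ⧸ K := K.mkQ ∘ₗ W.subtype with hψ
  have hker : LinearMap.ker φ = LinearMap.ker ψ := by
    ext x
    simp only [hφ, hψ, LinearMap.mem_ker, LinearMap.comp_apply, Submodule.mkQ_apply,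
      Submodule.Quotient.mk_eq_zero, Submodule.subtype_apply, hM, Submodule.mem_map,
      Submodule.mem_inf]
    constructor
    · rintro ⟨z, ⟨hz, hzK⟩, h⟩
      have : z - x = 0 := hA _ (sub_mem hz x.2) (by rw [map_sub, h, sub_self])
      rwa [← sub_eq_zero.1 this]
    · intro h
      exact ⟨x, ⟨x.2, h⟩, rfl⟩
  have hr : LinearMap.range φ = (W.map A).map M.mkQ := by
    rw [hφ, LinearMap.range_comp, LinearMap.range_comp, Submodule.range_subtype]
  have hψs : Function.Surjective ψ := by
    rw [← LinearMap.range_eq_top, hψ, LinearMap.range_comp, Submodule.range_subtype, hs]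
  have e1 := (φ.quotKerEquivRange).rank_eq
  have e2 := (ψ.quotKerEquivOfSurjective hψs).rank_eq
  have e3 := (Submodule.quotEquivOfEq _ _ hker).rank_eq
  have e4 := (Submodule.quotientQuotientEquivQuotient M (W.map A) hle).rank_eq
  have e5 := Submodule.rank_quotient_add_rank ((W.map A).map M.mkQ)
  rw [← e5, e4, ← e2, ← e3, e1, hr]

theorem codim_const {T : H →ₗ[ℂ] H} {W : Submodule ℂ H} (h : SymmData T W) (ε c : ℂ)
    (hε : ε.re = 0) (hs : 0 < ε.im * c.im) :
    Module.rank ℂ (H ⧸ W.map (AA T c)) = Module.rank ℂ (H ⧸ W.map (AA T ε)) := by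
  have hε0 : ε.im ≠ 0 := by rintro h0; simp [h0] at hs
  have hlt : ‖ε - c‖ < ‖ε + c‖ := by
    rw [← sq_lt_sq₀ (norm_nonneg _) (norm_nonneg _), ← Complex.normSq_eq_norm_sq,
      ← Complex.normSq_eq_norm_sq, Complex.normSq_apply, Complex.normSq_apply]
    simp only [Complex.sub_re, Complex.sub_im, Complex.add_re, Complex.add_im, hε]
    nlinarith
  have hne : ε + c ≠ 0 := by
    intro h0; rw [h0, norm_zero] at hlt; exact absurd hlt (not_lt.2 (norm_nonneg _))
  set d : ℂ := (ε - c) / (ε + c) with hd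
  have hd1 : ‖d‖ < 1 := by
    rw [hd, norm_div, div_lt_one (norm_pos_iff.2 hne)]; exact hlt
  set A0 : W →ₗ[ℂ] H := AA T ε ∘ₗ W.subtype with hA0
  have hinj : Function.Injective A0 := by
    rw [← LinearMap.ker_eq_bot, LinearMap.ker_eq_bot']
    intro m hm
    exact Subtype.ext (h.inj ε hε0 m m.2 hm)
  have hrange : LinearMap.range A0 = W.map (AA T ε) := by
    rw [hA0, LinearMap.range_comp, Submodule.range_subtype]
  have hcl : IsClosed ((LinearMap.range A0 : Submodule ℂ H) : Set H) := by
    rw [hrange]; exact h.closed_range ε hε0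
  haveI : CompleteSpace (LinearMap.range A0) := hcl.completeSpace_coe
  set e := LinearEquiv.ofInjective A0 hinj with he
  set V0 : LinearMap.range A0 →ₗ[ℂ] H := AA T (-ε) ∘ₗ W.subtype ∘ₗ e.symm.toLinearMap with hV0
  have hV0b : ∀ x, ‖V0 x‖ ≤ 1 * ‖x‖ := by
    intro x
    obtain ⟨w, rfl⟩ := e.surjective x
    have h1 : ‖V0 (e w)‖ = ‖AA T (-ε) (w : H)‖ := by simp [hV0]
    have h2 : ‖e w‖ = ‖AA T ε (w : H)‖ := rfl
    rw [h1, h2, one_mul, h.isom ε hε w w.2]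
  set V : LinearMap.range A0 →L[ℂ] H := V0.mkContinuous 1 hV0b with hV
  set X : H →L[ℂ] H := V ∘L (LinearMap.range A0).orthogonalProjection with hX
  have hXn : ‖X‖ ≤ 1 := by
    refine (ContinuousLinearMap.opNorm_comp_le _ _).trans ?_
    have h1 : ‖V‖ ≤ 1 := LinearMap.mkContinuous_norm_le _ zero_le_one _
    have h2 := (LinearMap.range A0).orthogonalProjection_norm_le
    exact mul_le_one₀ h1 (norm_nonneg _) h2
  have hXf : ∀ f ∈ W, X (AA T ε f) = AA T (-ε) f := by
    intro f hf
    have h1 : (LinearMap.range A0).orthogonalProjection (AA T ε f) = e ⟨f, hf⟩ :=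
      Submodule.orthogonalProjection_mem_subspace_eq_self (e ⟨f, hf⟩)
    rw [hX, ContinuousLinearMap.comp_apply, h1]
    simp [hV, hV0]
  have hnorm : ‖-(d • X)‖ < 1 := by
    rw [norm_neg, norm_smul]
    nlinarith [norm_nonneg d, norm_nonneg X]
  set U : H ≃L[ℂ] H := ContinuousLinearEquiv.unitsEquiv ℂ H (Units.oneSub _ hnorm) with hU
  have hUx : ∀ x, U x = x + d • X x := by
    intro x
    simp [hU]
  have h1d : 1 + d ≠ 0 := by
    intro h0
    have : d = -1 := by linear_combination h0
    rw [this] at hd1; simp at hd1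
  have hUf : ∀ f ∈ W, U (AA T ε f) = AA T c ((1 + d) • f) := by
    intro f hf
    rw [hUx, hXf f hf, map_smul]
    simp only [AA_apply]
    have : (1 + d) * c = ε - d * ε := by rw [hd]; field_simp; ring
    have h3 : (1 + d) • (T f - c • f) = T f + d • T f - (ε - d * ε) • f := by
      rw [← this]; module
    rw [h3]; module
  have hmap : (W.map (AA T ε)).map U.toLinearEquiv.toLinearMap = W.map (AA T c) := by
    ext y
    simp only [Submodule.mem_map]
    constructor
    · rintro ⟨_, ⟨f, hf, rfl⟩, rfl⟩
      exact ⟨(1 + d) • f, W.smul_mem _ hf, (hUf f hf).symm⟩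
    · rintro ⟨f, hf, rfl⟩
      refine ⟨_, ⟨(1 + d)⁻¹ • f, W.smul_mem _ hf, rfl⟩, ?_⟩
      refine (hUf _ (W.smul_mem _ hf)).trans ?_
      rw [smul_smul, mul_inv_cancel₀ h1d, one_smul]
  exact (Submodule.Quotient.equiv _ _ U.toLinearEquiv hmap).rank_eq.symm

theorem DD_dense {T : H →ₗ[ℂ] H} {W : Submodule ℂ H} (h : SymmData T W) 
    (hfin : Module.rank ℂ (H ⧸ W.map (AA T Complex.I)) < ℵ₀) (m : ℕ) :
    Dense (DD T W m : Set H) := by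
  have hI : Complex.I.im ≠ 0 := by simp
  haveI : FiniteDimensional ℂ (H ⧸ W.map (AA T Complex.I)) := Module.rank_lt_aleph0_iff.1 hfin
  induction m with
  | zero => exact dense_univ
  | succ m ih =>
    have key : (W : Set H) ⊆ closure (DD T W (m + 1) : Set H) := by
      intro x hx
      rw [Metric.mem_closure_iff]
      intro ε hε
      obtain ⟨y, hy, ⟨z, hz, rfl⟩, hlt⟩ := dense_inter (DD T W m) _ ih
        (h.closed_range Complex.I hI) (AA T Complex.I x) ⟨x, hx, rfl⟩ ε hε
      refine ⟨z, mem_DD_of_sub T W m Complex.I z hz hy, ?_⟩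
      have := h.bound Complex.I (z - x) (sub_mem hz hx)
      rw [map_sub] at this
      rw [dist_comm, dist_eq_norm]
      simp at this
      exact this.trans_lt hlt
    rw [dense_iff_closure_eq]
    have := closure_minimal key isClosed_closure
    rw [h.dense.closure_eq] at this
    exact Set.univ_subset_iff.1 this

theorem RR_codim {T : H →ₗ[ℂ] H} {W : Submodule ℂ H} (h : SymmData T W) (l : List ℂ)
    (hl : ∀ c ∈ l, c.im ≠ 0) (hfin : ∀ c ∈ l, Module.rank ℂ (H ⧸ W.map (AA T c)) < ℵ₀) :
    Module.rank ℂ (H ⧸ RR T W l) = (l.map fun c => Module.rank ℂ (H ⧸ W.map (AA T c))).sum ∧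
      Module.rank ℂ (H ⧸ RR T W l) < ℵ₀ := by
  induction l with
  | nil =>
    have : RR T W [] = ⊤ := by
      ext y; simp only [RR, Submodule.mem_map, Submodule.mem_top, iff_true]
      exact ⟨y, mem_DD_zero _ _ _, by simp [QQ]⟩
    rw [this]
    simp [Cardinal.aleph0_pos]
  | cons c l ih =>
    obtain ⟨h1, h2⟩ := ih (fun d hd => hl d (by simp [hd])) (fun d hd => hfin d (by simp [hd]))
    have hcl := h.RR_closed l (fun d hd => hl d (by simp [hd]))
    haveI : FiniteDimensional ℂ (H ⧸ RR T W l) := Module.rank_lt_aleph0_iff.1 h2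
    have h3 := codim_add (AA T c) W (RR T W l) (h.inj c (hl c (by simp)))
      (dense_surj W _ h.dense hcl)
    rw [RR_cons, h3]
    refine ⟨by rw [h1]; simp, Cardinal.add_lt_aleph0 (hfin c (by simp)) h2⟩

theorem exists_roots (k : ℕ) (hk : 1 ≤ k) (μ : ℂ) (hμ : ∀ y : ℂ, y ^ k = μ → y.im ≠ 0) :
    ∃ l : List ℂ, l.length = k ∧ (∀ w ∈ l, 0 < w.im) ∧
      (l.map fun w => Polynomial.X - Polynomial.C (w ^ 2)).prod
        = Polynomial.X ^ k - Polynomial.C μ := by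
  have hsq : ∀ y : ℂ, ∃ w : ℂ, y.im ≠ 0 → 0 < w.im ∧ w ^ 2 = y := by
    intro y
    obtain ⟨w, hw⟩ := IsAlgClosed.exists_pow_nat_eq y (n := 2) (by norm_num)
    by_cases hy : y.im = 0
    · exact ⟨0, fun h => absurd hy h⟩
    have hw0 : w.im ≠ 0 := by
      intro h0; apply hy; rw [← hw, pow_two, Complex.mul_im, h0]; simp
    rcases lt_or_gt_of_ne hw0 with h1 | h1
    · exact ⟨-w, fun _ => ⟨by simpa using h1, by rw [neg_sq, hw]⟩⟩
    · exact ⟨w, fun _ => ⟨h1, hw⟩⟩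
  choose g hg using hsq
  set p : Polynomial ℂ := Polynomial.X ^ k - Polynomial.C μ with hp
  have hmon : p.Monic := Polynomial.monic_X_pow_sub_C μ (by omega)
  have hsp : p.Splits := IsAlgClosed.splits p
  have hroot : ∀ y ∈ p.roots, y.im ≠ 0 := by
    intro y hy
    apply hμ
    have := Polynomial.isRoot_of_mem_roots hy
    simp [hp, sub_eq_zero] at this
    exact this
  refine ⟨p.roots.toList.map g, ?_, ?_, ?_⟩
  · rw [List.length_map, Multiset.length_toList, ← hsp.natDegree_eq_card_roots, hp,
      Polynomial.natDegree_X_pow_sub_C]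
  · intro w hw
    obtain ⟨y, hy, rfl⟩ := List.mem_map.1 hw
    exact (hg y (hroot y (Multiset.mem_toList.1 hy))).1
  · rw [List.map_map]
    have h1 : p.roots.toList.map ((fun w => Polynomial.X - Polynomial.C (w ^ 2)) ∘ g)
        = p.roots.toList.map (fun y => Polynomial.X - Polynomial.C y) := by
      apply List.map_congr_left
      intro y hy
      simp only [Function.comp_apply]
      rw [(hg y (hroot y (Multiset.mem_toList.1 hy))).2]
    rw [h1, ← Multiset.prod_coe, ← Multiset.map_coe, Multiset.coe_toList]
    exact (hsp.eq_prod_roots_of_monic hmon).symm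

theorem QQ_append_neg (l : List ℂ) : QQ (l ++ l.map fun w => -w) =
    ((l.map fun w => Polynomial.X - Polynomial.C (w ^ 2)).prod).comp (Polynomial.X ^ 2) := by
  have : QQ (l ++ l.map fun w => -w) = QQ l * QQ (l.map fun w => -w) := by simp [QQ]
  rw [this]
  induction l with
  | nil => simp [QQ]
  | cons c l ih =>
    have ih' := ih (by simp [QQ])
    simp only [List.map_cons, QQ_cons, List.prod_cons, Polynomial.mul_comp, ← ih']
    simp
    ring

theorem T_symm {T : H →ₗ[ℂ] H} {W : Submodule ℂ H} (h : SymmData T W) (m : ℕ) (f g : H)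
    (hf : f ∈ DD T W m) (hg : g ∈ DD T W m) : ⟪(T ^ m) f, g⟫_ℂ = ⟪f, (T ^ m) g⟫_ℂ := by
  induction m generalizing f with
  | zero => simp
  | succ m ih =>
    obtain ⟨h1, h2⟩ := (mem_DD_add T W m 1 g).1 hg
    rw [DD_one] at h2
    have h3 := ih (T f) hf.2 h1
    rw [h.symm f hf.1 _ h2] at h3
    rw [pow_succ, Module.End.mul_apply, h3, ← pow_succ, pow_succ', Module.End.mul_apply]

theorem defect_eq (A : H →ₗ.[ℂ] H) (T : H →ₗ[ℂ] H) (hA : Dense (A.domain : Set H))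
    (hT : ∀ f : A.domain, A f = T f) (μ : ℂ)
    (hcl : IsClosed ((A.domain.map (AA T ((starRingEnd ℂ) μ)) : Submodule ℂ H) : Set H)) :
    Module.rank ℂ (kerAt A.adjoint μ)
      = Module.rank ℂ (H ⧸ A.domain.map (AA T ((starRingEnd ℂ) μ))) := by
  set R := A.domain.map (AA T ((starRingEnd ℂ) μ)) with hR
  haveI : CompleteSpace R := hcl.completeSpace_coe
  have h1 : (kerAt A.adjoint μ).map A.adjoint.domain.subtype = Rᗮ := by
    ext y
    rw [Submodule.mem_orthogonal', Submodule.mem_map]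
    constructor
    · rintro ⟨y, hy, rfl⟩ _ ⟨x, hx, rfl⟩
      have hy' : A.adjoint y = μ • (y : H) := by
        have : A.adjoint.toFun y - μ • (y : H) = 0 := hy
        exact sub_eq_zero.1 this
      have h2 := LinearPMap.adjoint_isFormalAdjoint hA y ⟨x, hx⟩
      rw [hy', hT, inner_smul_left] at h2
      rw [AA_apply, inner_sub_right, inner_smul_right]
      simp only [Submodule.subtype_apply] at h2 ⊢
      rw [h2, sub_self]
    · intro hy
      have h2 : ∀ x : A.domain, ⟪μ • y, (x : H)⟫_ℂ = ⟪y, A x⟫_ℂ := by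
        intro x
        have := hy _ ⟨x, x.2, rfl⟩
        rw [AA_apply, inner_sub_right, inner_smul_right, sub_eq_zero] at this
        rw [hT, inner_smul_left, this]
      refine ⟨⟨y, LinearPMap.mem_adjoint_domain_of_exists y ⟨_, h2⟩⟩, ?_, rfl⟩
      have := LinearPMap.adjoint_apply_eq hA
        ⟨y, LinearPMap.mem_adjoint_domain_of_exists y ⟨_, h2⟩⟩ h2
      exact sub_eq_zero.2 this
  rw [(Submodule.equivMapOfInjective A.adjoint.domain.subtype (Submodule.injective_subtype _)
    (kerAt A.adjoint μ)).rank_eq, h1]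
  exact (Submodule.quotientEquivOfIsCompl R Rᗮ Submodule.isCompl_orthogonal_of_hasOrthogonalProjection).rank_eq.symm

theorem pmapPow_eq (S : H →ₗ.[ℂ] H) (T : H →ₗ[ℂ] H) (hT : ∀ f : S.domain, S f = T f) (m : ℕ) :
    (pmapPow S (m + 1)).domain = DD T S.domain (m + 1) ∧
      ∀ f : (pmapPow S (m + 1)).domain, pmapPow S (m + 1) f = (T ^ (m + 1)) f := by
  induction m with
  | zero => 
    refine ⟨(DD_one T S.domain).symm, fun f => ?_⟩
    have h1 : ∀ x : H, (T ^ (0 + 1)) x = T x := fun x => by rw [zero_add, pow_one]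
    exact (hT f).trans (h1 f).symm
  | succ m ih =>
    obtain ⟨h1, h2⟩ := ih
    constructor
    · ext f
      rw [mem_DD_add T S.domain (m + 1) 1, ← h1, DD_one]
      change f ∈ Submodule.map _ _ ↔ _
      rw [Submodule.mem_map]
      constructor
      · rintro ⟨x, hx, rfl⟩
        refine ⟨x.2, ?_⟩
        have hx' : pmapPow S (m + 1) x ∈ S.domain := hx
        rwa [h2] at hx'
      · rintro ⟨hf, hx⟩
        refine ⟨⟨f, hf⟩, ?_, rfl⟩
        change pmapPow S (m + 1) _ ∈ S.domain
        rwa [h2]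
    · rintro ⟨f, hf⟩
      obtain ⟨x, hx, hxf⟩ := hf
      have hx' : pmapPow S (m + 1) x ∈ S.domain := hx
      subst hxf
      have key : pmapPow S (m + 2) ⟨(pmapPow S (m + 1)).domain.subtype x, ⟨x, hx, rfl⟩⟩
          = S ⟨pmapPow S (m + 1) x, hx'⟩ := by
        have he : (Submodule.equivMapOfInjective (pmapPow S (m + 1)).domain.subtype
          (Submodule.injective_subtype _)
          (S.domain.comap (pmapPow S (m + 1)).toFun)).symm ⟨(pmapPow S (m + 1)).domain.subtype x,
            ⟨x, hx, rfl⟩⟩ = ⟨x, hx⟩ := by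
          rw [LinearEquiv.symm_apply_eq]
          rfl
        exact congrArg (fun z => S.toFun ((pmapPow S (m + 1)).toFun.restrict
          (p := S.domain.comap (pmapPow S (m + 1)).toFun) (q := S.domain) (fun _ hx => hx) z)) he
      refine key.trans ?_
      rw [hT]
      change T (pmapPow S (m + 1) x) = (T ^ (m + 1 + 1)) (x : H)
      rw [h2, pow_succ' T (m + 1)]
      rfl

/-- Everything about `T ^ (2k) - ν` for `ν` a unit imaginary number. -/
theorem power_data {T : H →ₗ[ℂ] H} {W : Submodule ℂ H} (h : SymmData T W)
    (hp : Module.rank ℂ (H ⧸ W.map (AA T (-Complex.I))) < ℵ₀)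
    (hm : Module.rank ℂ (H ⧸ W.map (AA T Complex.I)) < ℵ₀) (k : ℕ) (hk : 1 ≤ k)
    (ν : ℂ) (hν : ν.im ≠ 0) :
    IsClosed (((DD T W (2 * k)).map (AA (T ^ (2 * k)) ν) : Submodule ℂ H) : Set H) ∧
    (∃ C : ℝ, 0 < C ∧ ∀ f ∈ DD T W (2 * k), C * ‖f‖ ≤ ‖AA (T ^ (2 * k)) ν f‖) ∧
    Module.rank ℂ (H ⧸ (DD T W (2 * k)).map (AA (T ^ (2 * k)) ν)) =
      (k : Cardinal) * (Module.rank ℂ (H ⧸ W.map (AA T (-Complex.I))) +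
        Module.rank ℂ (H ⧸ W.map (AA T Complex.I))) := by
  obtain ⟨l, hlen, hpos, hprod⟩ := exists_roots k hk ν (by
    intro y hy h0
    apply hν
    have : y = (y.re : ℂ) := Complex.ext rfl (by simpa using h0)
    rw [← hy, this, ← Complex.ofReal_pow, Complex.ofReal_im])
  set L := l ++ l.map fun w => -w with hL
  have hLlen : L.length = 2 * k := by simp [hL, hlen]; ring
  have hQ : Polynomial.aeval T (QQ L) = AA (T ^ (2 * k)) ν := by
    rw [hL, QQ_append_neg, hprod]
    ext f
    simp [AA_apply, Module.algebraMap_end_apply, ← pow_mul]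
  have hLim : ∀ c ∈ L, c.im ≠ 0 := by
    intro c hc
    rw [hL, List.mem_append, List.mem_map] at hc
    rcases hc with hc | ⟨w, hw, rfl⟩
    · exact (hpos c hc).ne'
    · simpa using (hpos w hw).ne'
  have c1 : ∀ c ∈ l, Module.rank ℂ (H ⧸ W.map (AA T c)) =
      Module.rank ℂ (H ⧸ W.map (AA T Complex.I)) := fun c hc =>
    codim_const h Complex.I c (by simp) (by simpa using hpos c hc)
  have c2 : ∀ c ∈ l, Module.rank ℂ (H ⧸ W.map (AA T (-c))) =
      Module.rank ℂ (H ⧸ W.map (AA T (-Complex.I))) := fun c hc =>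
    codim_const h (-Complex.I) (-c) (by simp) (by simpa using hpos c hc)
  have hLfin : ∀ c ∈ L, Module.rank ℂ (H ⧸ W.map (AA T c)) < ℵ₀ := by
    intro c hc
    rw [hL, List.mem_append, List.mem_map] at hc
    rcases hc with hc | ⟨w, hw, rfl⟩
    · rw [c1 c hc]; exact hm
    · rw [c2 w hw]; exact hp
  have hRR : RR T W L = (DD T W (2 * k)).map (AA (T ^ (2 * k)) ν) := by
    rw [RR, hLlen, hQ]
  refine ⟨?_, ?_, ?_⟩
  · rw [← hRR]; exact h.RR_closed L hLim
  · have := h.QQ_bound L hLim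
    rwa [hLlen, hQ] at this
  · rw [← hRR, (RR_codim h L hLim hLfin).1, hL, List.map_append, List.map_map, List.sum_append,
      List.map_congr_left c1,
      show l.map ((fun c => Module.rank ℂ (H ⧸ W.map (AA T c))) ∘ fun w => -w) =
        l.map (fun _ => Module.rank ℂ (H ⧸ W.map (AA T (-Complex.I)))) from
        List.map_congr_left c2]
    simp only [List.map_const', List.sum_replicate, hlen, nsmul_eq_mul]
    ring

/-- Even powers of a densely defined, closed, symmetric operator with finite
deficiency indices: `S^{2k}` is densely defined, symmetric, closed,
`‖S^{2k} f + f‖ ≥ ‖f‖` on its domain, and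
`n₊(S^{2k}) = n₋(S^{2k}) = k (n₊(S) + n₋(S))`. -/
theorem even_powers_deficiency_finite (S : H →ₗ.[ℂ] H)
    (hd : Dense (S.domain : Set H)) (hc : S.IsClosed) (hsym : IsSymmP S)
    (hp : nPlus S < ℵ₀) (hm : nMinus S < ℵ₀) (k : ℕ) (hk : 1 ≤ k) :
    Dense (((pmapPow S (2 * k)).domain : Submodule ℂ H) : Set H) ∧
    IsSymmP (pmapPow S (2 * k)) ∧ (pmapPow S (2 * k)).IsClosed ∧
    (∀ f : (pmapPow S (2 * k)).domain, ‖pmapPow S (2 * k) f + (f : H)‖ ≥ ‖(f : H)‖) ∧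
    nPlus (pmapPow S (2 * k)) = (k : Cardinal) * (nPlus S + nMinus S) ∧
    nMinus (pmapPow S (2 * k)) = (k : Cardinal) * (nPlus S + nMinus S) := by
  obtain ⟨T, hT0⟩ := LinearMap.exists_extend S.toFun
  have hT : ∀ f : S.domain, S f = T f := fun f => (LinearMap.congr_fun hT0 f).symm
  have h : SymmData T S.domain := by
    refine ⟨hd, fun f hf g hg => ?_, ?_⟩
    · have := hsym ⟨f, hf⟩ ⟨g, hg⟩
      rwa [hT, hT] at this
    · have hcl : IsClosed (S.graph : Set (H × H)) := hc
      convert hcl using 1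
      ext p
      rw [Set.mem_ofPred_eq, SetLike.mem_coe, LinearPMap.mem_graph_iff]
      constructor
      · rintro ⟨h1, h2⟩
        exact ⟨⟨p.1, h1⟩, rfl, by rw [hT, h2]⟩
      · rintro ⟨y, h1, h2⟩
        rw [← h1, ← h2, hT]
        exact ⟨y.2, rfl⟩
  have hP : nPlus S = Module.rank ℂ (H ⧸ S.domain.map (AA T (-Complex.I))) := by
    have := defect_eq S T hd hT Complex.I (h.closed_range _ (by simp))
    rwa [Complex.conj_I] at this
  have hM : nMinus S = Module.rank ℂ (H ⧸ S.domain.map (AA T Complex.I)) := by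
    have := defect_eq S T hd hT (-Complex.I) (h.closed_range _ (by simp))
    rwa [map_neg, Complex.conj_I, neg_neg] at this
  rw [hP] at hp
  rw [hM] at hm
  obtain ⟨hdom, hval⟩ := pmapPow_eq S T hT (2 * k - 1)
  rw [show 2 * k - 1 + 1 = 2 * k by omega] at hdom hval
  have hdense : Dense (((pmapPow S (2 * k)).domain : Submodule ℂ H) : Set H) := by
    rw [hdom]; exact DD_dense h hm _
  obtain ⟨p1, ⟨C, hC, p2⟩, p3⟩ := power_data h hp hm k hk (-Complex.I) (by simp)
  obtain ⟨m1, -, m3⟩ := power_data h hp hm k hk Complex.I (by simp)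
  refine ⟨hdense, ?_, ?_, ?_, ?_, ?_⟩
  · intro f g
    rw [hval, hval]
    exact T_symm h _ _ _ (hdom ▸ f.2) (hdom ▸ g.2)
  · have hcl : IsClosed ((pmapPow S (2 * k)).graph : Set (H × H)) := by
      apply IsSeqClosed.isClosed
      rintro x ⟨a, b⟩ hx hlim
      have ha : Filter.Tendsto (fun n => (x n).1) Filter.atTop (nhds a) :=
        (continuous_fst.tendsto _).comp hlim
      have hb : Filter.Tendsto (fun n => (x n).2) Filter.atTop (nhds b) :=
        (continuous_snd.tendsto _).comp hlim
      have hx1 : ∀ n, (x n).1 ∈ DD T S.domain (2 * k) ∧ (x n).2 = (T ^ (2 * k)) (x n).1 := by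
        intro n
        obtain ⟨y, h1, h2⟩ := (LinearPMap.mem_graph_iff _).1 (hx n)
        rw [← h1, ← h2, hval]
        exact ⟨hdom ▸ y.2, rfl⟩
      have hlim2 : Filter.Tendsto (fun n => AA (T ^ (2 * k)) (-Complex.I) (x n).1) Filter.atTop
          (nhds (b - (-Complex.I) • a)) := by
        have : (fun n => AA (T ^ (2 * k)) (-Complex.I) (x n).1)
            = fun n => (x n).2 - (-Complex.I) • (x n).1 := by
          ext n; rw [AA_apply, (hx1 n).2]
        rw [this]
        exact hb.sub (ha.const_smul _)
      obtain ⟨z, hz, hzb⟩ := p1.mem_of_tendsto hlim2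
        (Filter.Eventually.of_forall fun n => ⟨_, (hx1 n).1, rfl⟩)
      have hxz : Filter.Tendsto (fun n => (x n).1) Filter.atTop (nhds z) := by
        rw [tendsto_iff_norm_sub_tendsto_zero] at hlim2 ⊢
        have h0 := hlim2.const_mul C⁻¹
        rw [mul_zero] at h0
        refine squeeze_zero (fun _ => norm_nonneg _) (fun n => ?_) h0
        have := p2 _ (sub_mem (hx1 n).1 hz)
        rw [map_sub, hzb] at this
        rw [le_inv_mul_iff₀ hC]
        exact this
      have haz : a = z := tendsto_nhds_unique ha hxz
      subst haz
      rw [SetLike.mem_coe, LinearPMap.mem_graph_iff]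
      have hz' : a ∈ (pmapPow S (2 * k)).domain := hdom ▸ hz
      refine ⟨⟨a, hz'⟩, rfl, ?_⟩
      rw [hval]
      rw [AA_apply] at hzb
      exact sub_left_injective hzb
    exact hcl
  · intro f
    rw [hval]
    have hf : (f : H) ∈ DD T S.domain (2 * k) := hdom ▸ f.2
    obtain ⟨f, hf'⟩ := f
    simp only at hf ⊢
    rw [two_mul] at hf
    obtain ⟨f1, f2⟩ := (mem_DD_add T S.domain k k f).1 hf
    have h1 : ⟪(T ^ (2 * k)) f, f⟫_ℂ = ⟪(T ^ k) f, (T ^ k) f⟫_ℂ := by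
      rw [two_mul, pow_add, Module.End.mul_apply]
      exact T_symm h k _ _ f2 f1
    have h2 : RCLike.re ⟪(T ^ (2 * k)) f + f, f⟫_ℂ = ‖(T ^ k) f‖ ^ 2 + ‖f‖ ^ 2 := by
      rw [inner_add_left, h1, map_add, inner_self_eq_norm_sq, inner_self_eq_norm_sq]
    have h3 := re_inner_le_norm (𝕜 := ℂ) ((T ^ (2 * k)) f + f) f
    rw [h2] at h3
    rcases (norm_nonneg f).eq_or_lt with h0 | h0
    · rw [← h0]; exact norm_nonneg _
    · have : ‖f‖ * ‖f‖ ≤ ‖(T ^ (2 * k)) f + f‖ * ‖f‖ := by nlinarith [sq_nonneg ‖(T ^ k) f‖]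
      exact le_of_mul_le_mul_right this h0
  · have := defect_eq (pmapPow S (2 * k)) (T ^ (2 * k)) hdense hval Complex.I
      (by rw [Complex.conj_I, hdom]; exact p1)
    rw [Complex.conj_I, hdom] at this
    rw [hP, hM, ← p3, ← this]; rfl
  · have := defect_eq (pmapPow S (2 * k)) (T ^ (2 * k)) hdense hval (-Complex.I)
      (by rw [map_neg, Complex.conj_I, neg_neg, hdom]; exact m1)
    rw [map_neg, Complex.conj_I, neg_neg, hdom] at this
    rw [hP, hM, ← m3, ← this]; rfl
end
end

section
/- Let S be a densely defined, closed, symmetric operator in a complex Hilbert space H (with deficiency indices possibly infinite), let k ∈ ℕ, k ≥ 1, and assume that S^{2ℓ} is densely defined for every ℓ ∈ {1,…,k}. Then S^{2k} is symmetric and closed, it satisfies ‖S^{2k}f + f‖ ≥ ‖f‖ for all f ∈ dom(S^{2k}), and in cardinal arithmetic its deficiency indices satisfy n₊(S^{2k}) = n₋(S^{2k}) = k·n₊(S) + k·n₋(S), where the deficiency indices are Hilbert-space dimensions taken as cardinals. -/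
open scoped InnerProductSpace
open Cardinal

noncomputable section

variable {E F G H : Type*}
  [NormedAddCommGroup E] [InnerProductSpace ℂ E] [CompleteSpace E]
  [NormedAddCommGroup F] [InnerProductSpace ℂ F] [CompleteSpace F]
  [NormedAddCommGroup G] [InnerProductSpace ℂ G] [CompleteSpace G]
  [NormedAddCommGroup H] [InnerProductSpace ℂ H] [CompleteSpace H]

section helpers

set_option linter.unusedSectionVars false

universe u

theorem polar_equiv {K K' : Type u} [NormedAddCommGroup K] [InnerProductSpace ℂ K] [CompleteSpace K]
    [NormedAddCommGroup K'] [InnerProductSpace ℂ K'] [CompleteSpace K'] (T : K →L[ℂ] K')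
    (hinj : Function.Injective T) (hden : DenseRange T) : Nonempty (K ≃ₗᵢ[ℂ] K') := by
  have hpos : 0 ≤ (ContinuousLinearMap.adjoint T ∘L T : K →L[ℂ] K) := by
    rw [ContinuousLinearMap.nonneg_iff_isPositive]
    exact ContinuousLinearMap.isPositive_adjoint_comp_self T
  set B : K →L[ℂ] K := CFC.sqrt (ContinuousLinearMap.adjoint T ∘L T : K →L[ℂ] K) with hB
  have hBB : B * B = ContinuousLinearMap.adjoint T ∘L T := CFC.sqrt_mul_sqrt_self _ hpos
  have hBpos : 0 ≤ B := CFC.sqrt_nonneg _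
  have hBsa : IsSelfAdjoint B := IsSelfAdjoint.of_nonneg hBpos
  have hnorm : ∀ x, ‖T x‖ = ‖B x‖ := by
    intro x
    have h1 : ⟪B x, B x⟫_ℂ = ⟪T x, T x⟫_ℂ := by
      have : ⟪B x, B x⟫_ℂ = ⟪(B * B) x, x⟫_ℂ := by
        have := ContinuousLinearMap.adjoint_inner_left B x (B x)
        rw [← ContinuousLinearMap.star_eq_adjoint, hBsa.star_eq] at this
        exact this.symm
      rw [this, hBB]
      simp [ContinuousLinearMap.adjoint_inner_left]
    rw [inner_self_eq_norm_sq_to_K, inner_self_eq_norm_sq_to_K] at h1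
    have h2 : ‖B x‖ ^ 2 = ‖T x‖ ^ 2 := by exact_mod_cast h1
    exact ((sq_eq_sq₀ (norm_nonneg _) (norm_nonneg _)).1 h2).symm
  have hBd : DenseRange B := by
    have h : (LinearMap.range (B : K →ₗ[ℂ] K))ᗮ = ⊥ := by
      rw [ContinuousLinearMap.orthogonal_range, ← ContinuousLinearMap.star_eq_adjoint, hBsa.star_eq,
        LinearMap.ker_eq_bot']
      intro x hx
      apply hinj
      rw [map_zero, ← norm_eq_zero, hnorm]
      simpa using hx
    have := (Submodule.dense_iff_topologicalClosure_eq_top).2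
      ((Submodule.topologicalClosure_eq_top_iff).2 h)
    rw [LinearMap.coe_range] at this
    exact this
  exact ⟨LinearEquiv.extendOfIsometry (LinearEquiv.refl ℂ K) (B : K →ₗ[ℂ] K) (T : K →ₗ[ℂ] K') hBd hden
    (by intro x; exact hnorm x)⟩

open Filter Topology

/-- `A` restricted to `D` has closed graph and is bounded below. -/
def GB {H : Type u} [NormedAddCommGroup H] [InnerProductSpace ℂ H]
    (D : Submodule ℂ H) (A : H →ₗ[ℂ] H) : Prop :=
  IsClosed {x : H × H | x.1 ∈ D ∧ A x.1 = x.2} ∧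
    ∃ c : ℝ, 0 < c ∧ ∀ f ∈ D, c * ‖f‖ ≤ ‖A f‖

section hilb
variable {H : Type u} [NormedAddCommGroup H] [InnerProductSpace ℂ H] [CompleteSpace H]

theorem GB.cauchy {D : Submodule ℂ H} {A : H →ₗ[ℂ] H} (h : GB D A) (u : ℕ → H) (hu : ∀ n, u n ∈ D)
    {y : H} (hy : Tendsto (fun n => A (u n)) atTop (𝓝 y)) :
    ∃ f ∈ D, A f = y ∧ Tendsto u atTop (𝓝 f) := by
  obtain ⟨hcl, c, hc, hb⟩ := h
  have hcau : CauchySeq u := by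
    rw [Metric.cauchySeq_iff]
    intro ε hε
    obtain ⟨N, hN⟩ := Metric.cauchySeq_iff.1 hy.cauchySeq (c * ε) (by positivity)
    refine ⟨N, fun m hm n hn => ?_⟩
    have h1 := hN m hm n hn
    rw [dist_eq_norm, ← map_sub] at h1
    have h2 := hb (u m - u n) (D.sub_mem (hu m) (hu n))
    rw [dist_eq_norm]
    exact lt_of_mul_lt_mul_left (lt_of_le_of_lt h2 h1) hc.le
  obtain ⟨f, hf⟩ := cauchySeq_tendsto_of_complete hcau
  have := hcl.mem_of_tendsto (hf.prodMk_nhds hy) (Eventually.of_forall fun n => ⟨hu n, rfl⟩)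
  exact ⟨f, this.1, this.2, hf⟩

theorem GB.isClosed_map {D : Submodule ℂ H} {A : H →ₗ[ℂ] H} (h : GB D A) :
    IsClosed ((D.map A : Submodule ℂ H) : Set H) := by
  rw [← isSeqClosed_iff_isClosed]
  intro v y hv hy
  choose u hu hu' using hv
  obtain ⟨f, hf, hfy, -⟩ := h.cauchy u hu (y := y) (by simpa [hu'] using hy)
  exact ⟨f, hf, hfy⟩

theorem GB.comp {V D : Submodule ℂ H} {A B : H →ₗ[ℂ] H} (hA : GB V A) (hB : GB D B) :
    GB (D ⊓ V.comap B) (A ∘ₗ B) := by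
  refine ⟨?_, ?_⟩
  · rw [← isSeqClosed_iff_isClosed]
    rintro u ⟨x, y⟩ hu hlim
    have h1 : Tendsto (fun n => (u n).1) atTop (𝓝 x) := (continuous_fst.tendsto _).comp hlim
    have h2 : Tendsto (fun n => (u n).2) atTop (𝓝 y) := (continuous_snd.tendsto _).comp hlim
    obtain ⟨g, hg, hgy, hgl⟩ := hA.cauchy (fun n => B (u n).1) (fun n => (hu n).1.2) (y := y)
      (h2.congr fun n => ((hu n).2).symm)
    have := hB.1.mem_of_tendsto (h1.prodMk_nhds hgl) (Eventually.of_forall fun n => ⟨(hu n).1.1, rfl⟩)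
    obtain ⟨hx, hxg⟩ := this
    simp only at hx hxg
    refine ⟨⟨hx, ?_⟩, ?_⟩
    · simpa [hxg] using hg
    · simp [hxg, hgy]
  · obtain ⟨-, c, hc, h⟩ := hA
    obtain ⟨-, d, hd, h'⟩ := hB
    refine ⟨c * d, by positivity, fun f hf => ?_⟩
    have h1 := h _ hf.2
    have h2 := h' _ hf.1
    calc c * d * ‖f‖ = c * (d * ‖f‖) := by ring
      _ ≤ c * ‖B f‖ := by gcongr
      _ ≤ _ := h1

theorem GB.restrict {V L : Submodule ℂ H} {A : H →ₗ[ℂ] H} (hA : GB V A)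
    (hL : IsClosed (L : Set H)) : GB (V ⊓ L) A := by
  obtain ⟨h1, c, hc, h⟩ := hA
  refine ⟨?_, c, hc, fun f hf => h f hf.1⟩
  have : {x : H × H | x.1 ∈ V ⊓ L ∧ A x.1 = x.2} =
    {x : H × H | x.1 ∈ V ∧ A x.1 = x.2} ∩ {x : H × H | x.1 ∈ (L : Set H)} := by
    ext x
    simp only [Submodule.mem_inf, Set.mem_ofPred_eq, Set.mem_inter_iff, SetLike.mem_coe]
    tauto
  rw [this]
  exact h1.inter (hL.preimage continuous_fst)

theorem rank_key {V L : Submodule ℂ H} {A : H →ₗ[ℂ] H} (hA : GB V A) (hV : Dense (V : Set H))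
    (hL : IsClosed (L : Set H)) :
    Module.rank ℂ ((V ⊓ L).map A)ᗮ = Module.rank ℂ (V.map A)ᗮ + Module.rank ℂ Lᗮ := by
  have hMc := (hA.restrict hL).isClosed_map
  have hRc := hA.isClosed_map
  set M := (V ⊓ L).map A with hM
  set R := V.map A with hR
  have hMR : M ≤ R := Submodule.map_mono inf_le_left
  have : CompleteSpace M := hMc.completeSpace_coe
  have : CompleteSpace R := hRc.completeSpace_coe
  have : CompleteSpace L := hL.completeSpace_coe
  have e1 : Rᗮ ⊔ (Mᗮ ⊓ R) = Mᗮ := by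
    have := Submodule.sup_orthogonal_inf_of_hasOrthogonalProjection (Submodule.orthogonal_le hMR)
    rwa [Submodule.orthogonal_orthogonal, inf_comm] at this
  have e2 : Rᗮ ⊓ (Mᗮ ⊓ R) = ⊥ := by
    rw [eq_bot_iff]
    rintro x ⟨h1, h2⟩
    have := R.inf_orthogonal_eq_bot
    rw [← this]
    exact ⟨h2.2, h1⟩
  have e3 := Submodule.rank_sup_add_rank_inf_eq (Rᗮ) (Mᗮ ⊓ R)
  rw [e1, e2, rank_bot, add_zero] at e3
  rw [e3]
  congr 1
  obtain ⟨hcl, c, hc, hb⟩ := id hA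
  have hinj : LinearMap.ker (A.domRestrict V) = ⊥ := by
    rw [LinearMap.ker_eq_bot']
    intro m hm
    have h1 := hb m m.2
    have h2 : A m = 0 := hm
    rw [h2, norm_zero] at h1
    have : ‖(m : H)‖ = 0 := le_antisymm (by
      by_contra h; push Not at h; have := mul_pos hc h; linarith) (norm_nonneg _)
    ext; simpa using this
  obtain ⟨g, hg⟩ := LinearMap.exists_leftInverse_of_injective _ hinj
  have hgA : ∀ f (hf : f ∈ V), (g (A f) : H) = f := by
    intro f hf
    have := LinearMap.congr_fun hg ⟨f, hf⟩
    simpa using congrArg Subtype.val this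
  set T0 : (Mᗮ ⊓ R : Submodule ℂ H) →ₗ[ℂ] Lᗮ :=
    (Lᗮ.orthogonalProjectionOnto : H →ₗ[ℂ] Lᗮ) ∘ₗ V.subtype ∘ₗ g ∘ₗ (Mᗮ ⊓ R).subtype with hT0
  have hT0a : ∀ f (hf : f ∈ V) (hf' : A f ∈ Mᗮ ⊓ R), T0 ⟨A f, hf'⟩ = Lᗮ.orthogonalProjectionOnto f := by
    intro f hf hf'
    simp [hT0, hgA f hf]
  have hbd : ∀ x, ‖T0 x‖ ≤ c⁻¹ * ‖x‖ := by
    rintro ⟨x, hx⟩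
    obtain ⟨f, hf, rfl⟩ := id hx.2
    rw [hT0a f hf hx]
    have h1 : ‖Lᗮ.orthogonalProjectionOnto f‖ ≤ ‖f‖ := Submodule.norm_orthogonalProjectionOnto_apply_le _ _
    have h2 := hb f hf
    refine h1.trans ?_
    rw [inv_mul_eq_div, le_div_iff₀ hc, mul_comm]
    exact h2
  have : CompleteSpace (Mᗮ ⊓ R : Submodule ℂ H) :=
    ((Submodule.isClosed_orthogonal M).inter hRc).completeSpace_coe
  have hTi : Function.Injective (T0.mkContinuous _ hbd) := by
    rw [injective_iff_map_eq_zero]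
    rintro ⟨x, hx⟩ h0
    obtain ⟨f, hf, rfl⟩ := id hx.2
    rw [LinearMap.mkContinuous_apply, hT0a f hf hx, Submodule.orthogonalProjectionOnto_eq_zero_iff,
      Submodule.orthogonal_orthogonal] at h0
    have hm : A f ∈ M := ⟨f, ⟨hf, h0⟩, rfl⟩
    have : A f ∈ M ⊓ Mᗮ := ⟨hm, hx.1⟩
    rw [M.inf_orthogonal_eq_bot] at this
    ext
    simpa using this
  have hTd : DenseRange (T0.mkContinuous _ hbd) := by
    have hs : DenseRange (Lᗮ.orthogonalProjectionOnto : H → Lᗮ) := by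
      apply Function.Surjective.denseRange
      intro y
      exact ⟨y, Submodule.orthogonalProjectionOnto_mem_subspace_eq_self y⟩
    have h1 : Dense ((Lᗮ.orthogonalProjectionOnto : H → Lᗮ) '' (V : Set H)) :=
      hs.dense_image (ContinuousLinearMap.continuous _) hV
    refine h1.mono ?_
    rintro _ ⟨f, hf, rfl⟩
    have hfR : A f ∈ R := ⟨f, hf, rfl⟩
    rw [← Submodule.sup_orthogonal_inf_of_hasOrthogonalProjection hMR] at hfR
    obtain ⟨m, hm, r, hr, hmr⟩ := Submodule.mem_sup.1 hfR
    obtain ⟨f1, hf1, rfl⟩ := id hm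
    have hr' : r = A (f - f1) := by rw [map_sub, ← hmr]; abel
    subst hr'
    refine ⟨⟨_, hr⟩, ?_⟩
    rw [LinearMap.mkContinuous_apply, hT0a _ (V.sub_mem hf hf1.1) hr, map_sub]
    have : Lᗮ.orthogonalProjectionOnto f1 = 0 := by
      rw [Submodule.orthogonalProjectionOnto_eq_zero_iff, Submodule.orthogonal_orthogonal]
      exact hf1.2
    rw [this, sub_zero]
  obtain ⟨e⟩ := polar_equiv _ hTi hTd
  exact e.toLinearEquiv.rank_eq



/-- Densely defined closed symmetric, in terms of a total linear extension `T` of the operator. -/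
structure SymOn (V : Submodule ℂ H) (T : H →ₗ[ℂ] H) : Prop where
  dense : Dense (V : Set H)
  closed : IsClosed {x : H × H | x.1 ∈ V ∧ T x.1 = x.2}
  symm : ∀ f ∈ V, ∀ g ∈ V, ⟪T f, g⟫_ℂ = ⟪f, T g⟫_ℂ

/-- `T - μ`. -/
abbrev shiftOp (T : H →ₗ[ℂ] H) (μ : ℂ) : H →ₗ[ℂ] H := T - algebraMap ℂ (Module.End ℂ H) μ

theorem shiftOp_apply (T : H →ₗ[ℂ] H) (μ : ℂ) (f : H) : shiftOp T μ f = T f - μ • f := by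
  simp [shiftOp]

theorem SymOn.below {V : Submodule ℂ H} {T : H →ₗ[ℂ] H} (h : SymOn V T) (μ : ℂ) (f : H)
    (hf : f ∈ V) : |μ.im| * ‖f‖ ≤ ‖shiftOp T μ f‖ := by
  have h1 : (⟪f, T f⟫_ℂ).im = 0 := by
    have := h.symm f hf f hf
    rw [← inner_conj_symm, Complex.conj_eq_iff_im] at this
    exact this
  have h2 : (⟪f, shiftOp T μ f⟫_ℂ).im = - μ.im * ‖f‖ ^ 2 := by
    rw [shiftOp_apply, inner_sub_right, inner_smul_right, inner_self_eq_norm_sq_to_K, Complex.sub_im, h1]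
    have : ((‖f‖ : ℂ) ^ 2) = ((‖f‖ ^ 2 : ℝ) : ℂ) := by push_cast; rfl
    simp only [Complex.coe_algebraMap]
    rw [this, Complex.im_mul_ofReal]
    ring
  have h3 : |μ.im| * ‖f‖ ^ 2 ≤ ‖f‖ * ‖shiftOp T μ f‖ := by
    calc |μ.im| * ‖f‖ ^ 2 = |(⟪f, shiftOp T μ f⟫_ℂ).im| := by
          rw [h2, abs_mul, abs_neg, abs_of_nonneg (sq_nonneg ‖f‖)]
      _ ≤ ‖⟪f, shiftOp T μ f⟫_ℂ‖ := Complex.abs_im_le_norm _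
      _ ≤ _ := norm_inner_le_norm _ _
  rcases eq_or_lt_of_le (norm_nonneg f) with h0 | h0
  · rw [← h0]; simp
  · refine le_of_mul_le_mul_left ?_ h0
    linarith [h3]

theorem SymOn.gb {V : Submodule ℂ H} {T : H →ₗ[ℂ] H} (h : SymOn V T) {μ : ℂ} (hμ : μ.im ≠ 0) :
    GB V (shiftOp T μ) := by
  refine ⟨?_, |μ.im|, abs_pos.2 hμ, fun f hf => h.below μ f hf⟩
  have : {x : H × H | x.1 ∈ V ∧ shiftOp T μ x.1 = x.2} =
      (fun x : H × H => (x.1, x.2 + μ • x.1)) ⁻¹' {x : H × H | x.1 ∈ V ∧ T x.1 = x.2} := by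
    ext x
    simp only [Set.mem_ofPred_eq, Set.mem_preimage, shiftOp_apply, sub_eq_iff_eq_add]
  rw [this]
  exact h.closed.preimage (by fun_prop)

/-- Defect space `ran(T - μ)ᗮ`. -/
abbrev defSp (V : Submodule ℂ H) (T : H →ₗ[ℂ] H) (μ : ℂ) : Submodule ℂ H := (V.map (shiftOp T μ))ᗮ

theorem SymOn.rank_le {V : Submodule ℂ H} {T : H →ₗ[ℂ] H} (h : SymOn V T) {μ ν : ℂ}
    (hμν : ‖μ - ν‖ < |μ.im|) :
    Module.rank ℂ (defSp V T ν) ≤ Module.rank ℂ (defSp V T μ) := by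
  have hμ : μ.im ≠ 0 := abs_pos.1 (lt_of_le_of_lt (norm_nonneg _) hμν)
  have hRc := (h.gb hμ).isClosed_map
  have : CompleteSpace (V.map (shiftOp T μ)) := hRc.completeSpace_coe
  refine LinearMap.rank_le_of_injective
    (((defSp V T μ).orthogonalProjectionOnto : H →ₗ[ℂ] _) ∘ₗ (defSp V T ν).subtype) ?_
  rw [injective_iff_map_eq_zero]
  rintro ⟨x, hx⟩ h0
  have h0' : (defSp V T μ).orthogonalProjectionOnto x = 0 := h0
  rw [Submodule.orthogonalProjectionOnto_eq_zero_iff, Submodule.orthogonal_orthogonal] at h0'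
  obtain ⟨f, hf, hfx⟩ := h0'
  have h1 : ⟪shiftOp T ν f, x⟫_ℂ = 0 := hx _ ⟨f, hf, rfl⟩
  have h2 : shiftOp T ν f = x + (μ - ν) • f := by
    rw [← hfx, shiftOp_apply, shiftOp_apply, sub_smul]; abel
  have h3 : (‖x‖ : ℂ) ^ 2 = - ⟪(μ - ν) • f, x⟫_ℂ := by
    rw [h2, inner_add_left, inner_self_eq_norm_sq_to_K] at h1
    exact eq_neg_of_add_eq_zero_left h1
  have h4 : ‖x‖ ^ 2 ≤ ‖μ - ν‖ * ‖f‖ * ‖x‖ := by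
    have := congrArg norm h3
    rw [norm_neg, norm_pow, Complex.norm_real, norm_norm] at this
    rw [this, ← norm_smul]
    exact norm_inner_le_norm _ _
  have h5 := h.below μ f hf
  rw [hfx] at h5
  ext
  simp only [ZeroMemClass.coe_zero]
  by_contra hne
  have hxp : 0 < ‖x‖ := norm_pos_iff.2 hne
  have h6 : ‖x‖ ≤ ‖μ - ν‖ * ‖f‖ := by
    refine le_of_mul_le_mul_right ?_ hxp
    linarith
  have hfp : 0 < ‖f‖ := by
    rcases eq_or_lt_of_le (norm_nonneg f) with h0 | h0
    · rw [← h0] at h6; linarith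
    · exact h0
  have := mul_lt_mul_of_pos_right hμν hfp
  linarith

theorem SymOn.rank_eq_of_convex {V : Submodule ℂ H} {T : H →ₗ[ℂ] H} (h : SymOn V T) {s : Set ℂ}
    (hs : Convex ℝ s) (hs' : ∀ z ∈ s, z.im ≠ 0) {μ ν : ℂ} (hμ : μ ∈ s) (hν : ν ∈ s) :
    Module.rank ℂ (defSp V T μ) = Module.rank ℂ (defSp V T ν) := by
  refine hs.isPreconnected.induction₂
    (fun x y => Module.rank ℂ (defSp V T x) = Module.rank ℂ (defSp V T y)) ?_ ?_ ?_ hμ hν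
  · intro x hx
    apply Filter.Eventually.filter_mono nhdsWithin_le_nhds
    have c1 : ∀ᶠ y in 𝓝 x, ‖x - y‖ < |x.im| := by
      have : ContinuousAt (fun y : ℂ => ‖x - y‖) x := by fun_prop
      apply this.eventually_lt continuousAt_const
      simpa using hs' x hx
    have c2 : ∀ᶠ y in 𝓝 x, ‖y - x‖ < |y.im| := by
      have : ContinuousAt (fun y : ℂ => ‖y - x‖) x := by fun_prop
      have h' : ContinuousAt (fun y : ℂ => |y.im|) x :=
        (continuous_abs.comp Complex.continuous_im).continuousAt
      apply this.eventually_lt h'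
      simpa using hs' x hx
    filter_upwards [c1, c2] with y h1 h2
    exact le_antisymm (h.rank_le h2) (h.rank_le h1)
  · intro x y z _ _ _ h1 h2; exact h1.trans h2
  · intro x y _ _ h1; exact h1.symm

theorem SymOn.rank_upper {V : Submodule ℂ H} {T : H →ₗ[ℂ] H} (h : SymOn V T) {μ : ℂ}
    (hμ : 0 < μ.im) : Module.rank ℂ (defSp V T μ) = Module.rank ℂ (defSp V T Complex.I) :=
  h.rank_eq_of_convex (convex_halfSpace_im_gt 0) (fun z hz => ne_of_gt hz) hμ (by simp)

theorem SymOn.rank_lower {V : Submodule ℂ H} {T : H →ₗ[ℂ] H} (h : SymOn V T) {μ : ℂ}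
    (hμ : μ.im < 0) : Module.rank ℂ (defSp V T μ) = Module.rank ℂ (defSp V T (-Complex.I)) :=
  h.rank_eq_of_convex (convex_halfSpace_im_lt 0) (fun z hz => ne_of_lt hz) hμ (by simp)

/-- Domain of the `n`-th power. -/
def domPow (V : Submodule ℂ H) (T : H →ₗ[ℂ] H) (n : ℕ) : Submodule ℂ H :=
  ⨅ j : Fin n, V.comap (T ^ (j : ℕ))

theorem mem_domPow {V : Submodule ℂ H} {T : H →ₗ[ℂ] H} {n : ℕ} {f : H} :
    f ∈ domPow V T n ↔ ∀ j < n, (T ^ j) f ∈ V := by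
  simp only [domPow, Submodule.mem_iInf, Submodule.mem_comap]
  exact ⟨fun h j hj => h ⟨j, hj⟩, fun h j => h j j.2⟩

theorem domPow_succ (V : Submodule ℂ H) (T : H →ₗ[ℂ] H) (n : ℕ) (p : Polynomial ℂ) (hp : p.Monic)
    (hn : p.natDegree = n) :
    domPow V T (n + 1) = domPow V T n ⊓ V.comap (Polynomial.aeval T p) := by
  have key : ∀ f ∈ domPow V T n, (Polynomial.aeval T p f ∈ V ↔ (T ^ n) f ∈ V) := by
    intro f hf
    rw [mem_domPow] at hf
    rw [Polynomial.aeval_eq_sum_range, Finset.sum_range_succ, LinearMap.add_apply]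
    have hc : p.coeff p.natDegree = 1 := hp
    rw [hc, one_smul, hn]
    apply Submodule.add_mem_iff_right
    rw [LinearMap.sum_apply]
    refine Submodule.sum_mem _ fun j hj => ?_
    rw [LinearMap.smul_apply]
    exact V.smul_mem _ (hf j (Finset.mem_range.1 hj))
  ext f
  constructor
  · intro h
    have h1 : f ∈ domPow V T n := mem_domPow.2 fun j hj => mem_domPow.1 h j (by omega)
    exact ⟨h1, (key f h1).2 (mem_domPow.1 h n (by omega))⟩
  · rintro ⟨h1, h2⟩
    refine mem_domPow.2 fun j hj => ?_
    rcases Nat.lt_succ_iff_lt_or_eq.1 hj with h | rfl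
    · exact mem_domPow.1 h1 j h
    · exact (key f h1).1 h2

/-- Induction predicate. -/
structure GoodPoly (V : Submodule ℂ H) (T : H →ₗ[ℂ] H) (p : Polynomial ℂ) (n : ℕ)
    (c : Cardinal.{u}) : Prop where
  monic : p.Monic
  deg : p.natDegree = n
  gb : GB (domPow V T n) (Polynomial.aeval T p)
  rank : Module.rank ℂ ((domPow V T n).map (Polynomial.aeval T p))ᗮ = c

theorem goodPoly_one (V : Submodule ℂ H) (T : H →ₗ[ℂ] H) : GoodPoly V T 1 0 0 := by
  have hD : domPow V T 0 = ⊤ := by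
    ext f; simp [mem_domPow]
  refine ⟨Polynomial.monic_one, Polynomial.natDegree_one, ⟨?_, 1, one_pos, ?_⟩, ?_⟩
  · rw [hD]
    simp only [Submodule.mem_top, true_and, map_one, Module.End.one_apply]
    exact isClosed_eq continuous_fst continuous_snd
  · intro f _; simp
  · rw [hD]
    have : (⊤ : Submodule ℂ H).map (Polynomial.aeval T (1 : Polynomial ℂ)) = ⊤ := by
      rw [map_one]; exact Submodule.map_id _
    rw [this, Submodule.top_orthogonal_eq_bot, rank_bot]

theorem GoodPoly.step {V : Submodule ℂ H} {T : H →ₗ[ℂ] H} (h : SymOn V T) {p : Polynomial ℂ} {n : ℕ}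
    {c : Cardinal.{u}} (hp : GoodPoly V T p n c) {μ : ℂ} (hμ : μ.im ≠ 0) :
    GoodPoly V T ((Polynomial.X - Polynomial.C μ) * p) (n + 1)
      (Module.rank ℂ (defSp V T μ) + c) := by
  have hD := domPow_succ V T n p hp.monic hp.deg
  have hA : Polynomial.aeval T ((Polynomial.X - Polynomial.C μ) * p) =
      shiftOp T μ ∘ₗ Polynomial.aeval T p := by
    rw [map_mul, map_sub, Polynomial.aeval_X, Polynomial.aeval_C]
    rfl
  refine ⟨(Polynomial.monic_X_sub_C μ).mul hp.monic, ?_, ?_, ?_⟩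
  · rw [(Polynomial.monic_X_sub_C μ).natDegree_mul hp.monic, Polynomial.natDegree_X_sub_C, hp.deg,
      add_comm]
  · rw [hD, hA]
    exact (h.gb hμ).comp hp.gb
  · rw [hD, hA, Submodule.map_comp]
    have : (domPow V T n ⊓ V.comap (Polynomial.aeval T p)).map (Polynomial.aeval T p) =
        V ⊓ (domPow V T n).map (Polynomial.aeval T p) := by
      ext y
      constructor
      · rintro ⟨f, hf, rfl⟩
        exact ⟨hf.2, f, hf.1, rfl⟩
      · rintro ⟨hy, f, hf, rfl⟩
        exact ⟨f, ⟨hf, hy⟩, rfl⟩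
    rw [this, rank_key (h.gb hμ) h.dense hp.gb.isClosed_map, hp.rank]

theorem GoodPoly.step2 {V : Submodule ℂ H} {T : H →ₗ[ℂ] H} (h : SymOn V T) {p : Polynomial ℂ} {n : ℕ}
    {c : Cardinal.{u}} (hp : GoodPoly V T p n c) {w : ℂ} (hw : w.im ≠ 0) :
    GoodPoly V T ((Polynomial.X ^ 2 - Polynomial.C w) * p) (n + 2)
      (Module.rank ℂ (defSp V T (-Complex.I)) + Module.rank ℂ (defSp V T Complex.I) + c) := by
  obtain ⟨z, hz⟩ := IsAlgClosed.exists_pow_nat_eq w (n := 2) (by norm_num)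
  have hzi : z.im ≠ 0 := by
    intro h0
    apply hw
    rw [← hz, pow_two, Complex.mul_im, h0]; ring
  have hpoly : (Polynomial.X ^ 2 - Polynomial.C w) * p =
      (Polynomial.X - Polynomial.C (-z)) * ((Polynomial.X - Polynomial.C z) * p) := by
    rw [← hz]; simp only [map_neg, map_pow]; ring
  have h2 := (hp.step h hzi).step h (μ := -z) (by simpa using hzi)
  rw [← hpoly] at h2
  convert h2 using 1
  rcases lt_or_gt_of_ne hzi with h0 | h0
  · rw [h.rank_lower h0, h.rank_upper (μ := -z) (by simpa using h0), ← add_assoc]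
    congr 1
    exact add_comm _ _
  · rw [h.rank_upper h0, h.rank_lower (μ := -z) (by simpa using h0), ← add_assoc]

theorem goodPoly_list {V : Submodule ℂ H} {T : H →ₗ[ℂ] H} (h : SymOn V T) (l : List ℂ)
    (hl : ∀ w ∈ l, w.im ≠ 0) :
    GoodPoly V T ((l.map fun w => Polynomial.X ^ 2 - Polynomial.C w).prod) (2 * l.length)
      (l.length * (Module.rank ℂ (defSp V T (-Complex.I)) + Module.rank ℂ (defSp V T Complex.I))) := by
  induction l with
  | nil => simpa using goodPoly_one V T
  | cons w l ih =>
    have := (ih fun w hw => hl w (List.mem_cons_of_mem _ hw)).step2 h (hl w List.mem_cons_self)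
    rw [List.map_cons, List.prod_cons, List.length_cons]
    convert this using 1
    · ring
    · rw [Nat.cast_succ, add_mul, one_mul, add_comm]

theorem goodPoly_pow {V : Submodule ℂ H} {T : H →ₗ[ℂ] H} (h : SymOn V T) (k : ℕ) (hk : 1 ≤ k) (a : ℂ)
    (ha : a.im ≠ 0) :
    GoodPoly V T (Polynomial.X ^ (2 * k) - Polynomial.C a) (2 * k)
      (k * (Module.rank ℂ (defSp V T (-Complex.I)) + Module.rank ℂ (defSp V T Complex.I))) := by
  set q : Polynomial ℂ := Polynomial.X ^ k - Polynomial.C a with hq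
  have hqm : q.Monic := Polynomial.monic_X_pow_sub_C a (by omega)
  have hqs : q.Splits := IsAlgClosed.splits q
  have hprod := hqs.eq_prod_roots_of_monic hqm
  have hcard : q.roots.card = k := by
    rw [← hqs.natDegree_eq_card_roots]; exact Polynomial.natDegree_X_pow_sub_C
  have hroots : ∀ w ∈ q.roots.toList, w.im ≠ 0 := by
    intro w hw h0
    have hw := (Polynomial.mem_roots'.1 (Multiset.mem_toList.1 hw)).2
    rw [Polynomial.IsRoot, hq] at hw
    simp only [Polynomial.eval_sub, Polynomial.eval_pow, Polynomial.eval_X, Polynomial.eval_C,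
      sub_eq_zero] at hw
    apply ha
    have : w = (w.re : ℂ) := Complex.ext rfl (by simpa using h0)
    rw [← hw, this, ← Complex.ofReal_pow, Complex.ofReal_im]
  have := goodPoly_list h q.roots.toList hroots
  rw [Multiset.length_toList, hcard] at this
  convert this using 1
  have hc := congrArg (fun r : Polynomial ℂ => r.comp (Polynomial.X ^ 2)) hprod
  simp only [hq, Polynomial.sub_comp, Polynomial.pow_comp, Polynomial.X_comp, Polynomial.C_comp] at hc
  rw [← pow_mul, ← hq] at hc
  rw [hc, Polynomial.multiset_prod_comp, Multiset.map_map, ← Multiset.prod_toList,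
    ← Multiset.coe_toList q.roots]
  simp

theorem domPow_symm {V : Submodule ℂ H} {T : H →ₗ[ℂ] H} (h : SymOn V T) (n : ℕ) :
    ∀ f ∈ domPow V T n, ∀ g ∈ domPow V T n, ⟪(T ^ n) f, g⟫_ℂ = ⟪f, (T ^ n) g⟫_ℂ := by
  induction n with
  | zero => intro f _ g _; simp
  | succ n ih =>
    intro f hf g hg
    rw [mem_domPow] at hf hg
    have e1 : (T ^ (n + 1)) f = T ((T ^ n) f) := by rw [pow_succ']; rfl
    have e2 : (T ^ (n + 1)) g = (T ^ n) (T g) := by rw [pow_succ]; rfl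
    rw [e1, e2, h.symm _ (hf n (by omega)) _ (by simpa using hg 0 (by omega))]
    refine ih f (mem_domPow.2 fun j hj => hf j (by omega)) _ (mem_domPow.2 fun j hj => ?_)
    have := hg (j + 1) (by omega)
    rwa [pow_succ] at this

theorem domPow_below {V : Submodule ℂ H} {T : H →ₗ[ℂ] H} (h : SymOn V T) (k : ℕ) (f : H)
    (hf : f ∈ domPow V T (2 * k)) : ‖f‖ ≤ ‖(T ^ (2 * k)) f + f‖ := by
  have hf' := mem_domPow.1 hf
  have e1 : (T ^ (2 * k)) f = (T ^ k) ((T ^ k) f) := by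
    rw [two_mul, pow_add]; rfl
  have h1 : ⟪(T ^ (2 * k)) f, f⟫_ℂ = ⟪(T ^ k) f, (T ^ k) f⟫_ℂ := by
    rw [e1]
    refine domPow_symm h k _ (mem_domPow.2 fun j hj => ?_) _ (mem_domPow.2 fun j hj => hf' j (by omega))
    have := hf' (j + k) (by omega)
    rwa [pow_add] at this
  have h2 : RCLike.re ⟪(T ^ (2 * k)) f + f, f⟫_ℂ = ‖(T ^ k) f‖ ^ 2 + ‖f‖ ^ 2 := by
    rw [inner_add_left, h1, map_add, inner_self_eq_norm_sq, inner_self_eq_norm_sq]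
  have h3 := re_inner_le_norm (𝕜 := ℂ) ((T ^ (2 * k)) f + f) f
  rw [h2] at h3
  rcases eq_or_lt_of_le (norm_nonneg f) with h0 | h0
  · rw [← h0]; positivity
  · refine le_of_mul_le_mul_right ?_ h0
    nlinarith [sq_nonneg ‖(T ^ k) f‖]

end hilb

section final
variable {H : Type u} [NormedAddCommGroup H] [InnerProductSpace ℂ H] [CompleteSpace H]

theorem rank_kerAt_adjoint (S : H →ₗ.[ℂ] H) (hd : Dense (S.domain : Set H)) (T : H →ₗ[ℂ] H)
    (hT : ∀ f : S.domain, S f = T f) (z : ℂ) :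
    Module.rank ℂ (kerAt S.adjoint z) = Module.rank ℂ (defSp S.domain T (starRingEnd ℂ z)) := by
  have hmap : (kerAt S.adjoint z).map S.adjoint.domain.subtype =
      defSp S.domain T (starRingEnd ℂ z) := by
    ext x
    constructor
    · rintro ⟨y, hy, rfl⟩
      rintro _ ⟨f, hf, rfl⟩
      have h1 : S.adjoint y = z • (y : H) := sub_eq_zero.1 hy
      have h2 := LinearPMap.adjoint_isFormalAdjoint hd y ⟨f, hf⟩
      rw [h1, hT] at h2
      rw [inner_eq_zero_symm, shiftOp_apply, inner_sub_right, inner_smul_right]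
      rw [inner_smul_left] at h2
      simp only [Submodule.subtype_apply]
      rw [← h2, sub_self]
    · intro hx
      have h1 : ∀ f : S.domain, ⟪z • x, (f : H)⟫_ℂ = ⟪x, S f⟫_ℂ := by
        intro f
        have := hx _ ⟨f, f.2, rfl⟩
        rw [inner_eq_zero_symm, shiftOp_apply, inner_sub_right, inner_smul_right, sub_eq_zero] at this
        rw [inner_smul_left, hT, this]
      have hxd : x ∈ S.adjoint.domain := LinearPMap.mem_adjoint_domain_of_exists x ⟨_, h1⟩
      refine ⟨⟨x, hxd⟩, ?_, rfl⟩
      have := LinearPMap.adjoint_apply_eq hd ⟨x, hxd⟩ h1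
      exact sub_eq_zero.2 this
  rw [← hmap]
  exact (Submodule.equivMapOfInjective S.adjoint.domain.subtype
    (Submodule.injective_subtype _) _).rank_eq

theorem mem_pcomp_domain (T₂ T₁ : H →ₗ.[ℂ] H) (f : H) :
    f ∈ (pcomp T₂ T₁).domain ↔ ∃ h : f ∈ T₁.domain, T₁ ⟨f, h⟩ ∈ T₂.domain := by
  constructor
  · rintro ⟨y, hy, rfl⟩
    exact ⟨y.2, hy⟩
  · rintro ⟨h, h'⟩
    exact ⟨⟨f, h⟩, h', rfl⟩

theorem pcomp_apply (T₂ T₁ : H →ₗ.[ℂ] H) (f : (pcomp T₂ T₁).domain)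
    (h : (f : H) ∈ T₁.domain) (h' : T₁ ⟨f, h⟩ ∈ T₂.domain) :
    pcomp T₂ T₁ f = T₂ ⟨T₁ ⟨f, h⟩, h'⟩ := by
  have hs : (Submodule.equivMapOfInjective T₁.domain.subtype (Submodule.injective_subtype _)
      (T₂.domain.comap T₁.toFun)).symm f = ⟨⟨f, h⟩, h'⟩ :=
    (LinearEquiv.symm_apply_eq _).2 (Subtype.ext rfl)
  change T₂.toFun ((T₁.toFun.restrict (p := T₂.domain.comap T₁.toFun) (q := T₂.domain)
    fun _ hx => hx) ((Submodule.equivMapOfInjective T₁.domain.subtype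
      (Submodule.injective_subtype _) (T₂.domain.comap T₁.toFun)).symm f)) = _
  rw [hs]
  rfl

theorem pmapPow_spec (S : H →ₗ.[ℂ] H) (T : H →ₗ[ℂ] H) (hT : ∀ f : S.domain, S f = T f) (n : ℕ) :
    (pmapPow S (n + 1)).domain = domPow S.domain T (n + 1) ∧
      ∀ f : (pmapPow S (n + 1)).domain, pmapPow S (n + 1) f = (T ^ (n + 1)) f := by
  induction n with
  | zero =>
    refine ⟨?_, ?_⟩
    · ext f
      rw [mem_domPow]
      constructor
      · intro h j hj
        obtain rfl : j = 0 := by omega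
        exact h
      · intro h
        exact h 0 (by omega)
    · intro f
      rw [show T ^ (0 + 1) = T from pow_one T]
      exact hT f
  | succ n ih =>
    obtain ⟨ih1, ih2⟩ := ih
    have hdom : ∀ f, f ∈ (pmapPow S (n + 1 + 1)).domain ↔
        ∃ h : f ∈ (pmapPow S (n + 1)).domain, pmapPow S (n + 1) ⟨f, h⟩ ∈ S.domain :=
      fun f => mem_pcomp_domain _ _ f
    refine ⟨?_, ?_⟩
    · ext f
      rw [hdom, mem_domPow]
      constructor
      · rintro ⟨h1, h2⟩ j hj
        rw [ih2] at h2
        rw [ih1, mem_domPow] at h1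
        rcases Nat.lt_succ_iff_lt_or_eq.1 hj with h | rfl
        · exact h1 j h
        · exact h2
      · intro h
        have h1 : f ∈ (pmapPow S (n + 1)).domain := by
          rw [ih1, mem_domPow]
          exact fun j hj => h j (by omega)
        refine ⟨h1, ?_⟩
        rw [ih2]
        exact h (n + 1) (by omega)
    · intro f
      obtain ⟨h1, h2⟩ := (hdom f).1 f.2
      have h3 : pmapPow S (n + 1 + 1) f = S ⟨pmapPow S (n + 1) ⟨f, h1⟩, h2⟩ :=
        pcomp_apply S (pmapPow S (n + 1)) f h1 h2
      rw [h3, hT, pow_succ' T (n + 1)]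
      exact congrArg T (ih2 _)

theorem main_aux (S : H →ₗ.[ℂ] H)
    (hd : Dense (S.domain : Set H)) (hc : S.IsClosed) (hsym : IsSymmP S)
    (k : ℕ) (hk : 1 ≤ k)
    (hdense : Dense (((pmapPow S (2 * k)).domain : Submodule ℂ H) : Set H)) :
    IsSymmP (pmapPow S (2 * k)) ∧ (pmapPow S (2 * k)).IsClosed ∧
    (∀ f : (pmapPow S (2 * k)).domain, ‖pmapPow S (2 * k) f + (f : H)‖ ≥ ‖(f : H)‖) ∧
    nPlus (pmapPow S (2 * k)) = (k : Cardinal) * nPlus S + (k : Cardinal) * nMinus S ∧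
    nMinus (pmapPow S (2 * k)) = (k : Cardinal) * nPlus S + (k : Cardinal) * nMinus S := by
  obtain ⟨T, hT0⟩ := LinearMap.exists_extend S.toFun
  have hT : ∀ f : S.domain, S f = T f := fun f => (LinearMap.congr_fun hT0 f).symm
  have hgr : ∀ (A : H →ₗ.[ℂ] H) (B : H →ₗ[ℂ] H), (∀ f : A.domain, A f = B f) →
      (A.graph : Set (H × H)) = {x : H × H | x.1 ∈ A.domain ∧ B x.1 = x.2} := by
    intro A B hAB
    ext x
    rw [SetLike.mem_coe, LinearPMap.mem_graph_iff]
    constructor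
    · rintro ⟨y, hy, hy'⟩
      refine ⟨hy ▸ y.2, ?_⟩
      rw [← hy, ← hAB, hy']
    · rintro ⟨h1, h2⟩
      exact ⟨⟨x.1, h1⟩, rfl, by rw [hAB, h2]⟩
  have hS : SymOn S.domain T := by
    refine ⟨hd, ?_, ?_⟩
    · rw [← hgr S T hT]; exact hc
    · intro f hf g hg
      have := hsym ⟨f, hf⟩ ⟨g, hg⟩
      rwa [hT, hT] at this
  have hspec := pmapPow_spec S T hT (2 * k - 1)
  rw [show 2 * k - 1 + 1 = 2 * k by omega] at hspec
  obtain ⟨hdom, hval⟩ := hspec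
  have hpoly : ∀ a : ℂ, Polynomial.aeval T (Polynomial.X ^ (2 * k) - Polynomial.C a) =
      shiftOp (T ^ (2 * k)) a := by
    intro a
    rw [map_sub, map_pow, Polynomial.aeval_X, Polynomial.aeval_C]
  have hrank : ∀ z : ℂ, z.im ≠ 0 → Module.rank ℂ (kerAt (pmapPow S (2 * k)).adjoint z) =
      (k : Cardinal) * nPlus S + (k : Cardinal) * nMinus S := by
    intro z hz
    rw [rank_kerAt_adjoint _ hdense (T ^ (2 * k)) hval, nPlus, nMinus,
      rank_kerAt_adjoint S hd T hT, rank_kerAt_adjoint S hd T hT]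
    have := (goodPoly_pow hS k hk (starRingEnd ℂ z) (by simpa using hz)).rank
    rw [hpoly, ← hdom] at this
    rw [this, ← mul_add, map_neg, Complex.conj_I, neg_neg]
  refine ⟨?_, ?_, ?_, hrank _ (by simp), hrank _ (by simp)⟩
  · intro f g
    rw [hval, hval]
    exact domPow_symm hS _ _ (hdom ▸ f.2) _ (hdom ▸ g.2)
  · rw [LinearPMap.IsClosed, hgr _ _ hval]
    have := (goodPoly_pow hS k hk Complex.I (by simp)).gb.1
    rw [hpoly, ← hdom] at this
    have e : {x : H × H | x.1 ∈ (pmapPow S (2 * k)).domain ∧ (T ^ (2 * k)) x.1 = x.2} =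
      (fun x : H × H => (x.1, x.2 - Complex.I • x.1)) ⁻¹' {x : H × H |
        x.1 ∈ (pmapPow S (2 * k)).domain ∧ shiftOp (T ^ (2 * k)) Complex.I x.1 = x.2} := by
      ext x
      simp only [Set.mem_ofPred_eq, Set.mem_preimage, shiftOp_apply, sub_left_inj]
    rw [e]
    exact this.preimage (by fun_prop)
  · intro f
    rw [hval]
    exact domPow_below hS k f (hdom ▸ f.2)

end final

end helpers

/-- Even powers of a densely defined, closed, symmetric operator (deficiency indices
possibly infinite): if `S^{2ℓ}` is densely defined for `1 ≤ ℓ ≤ k` then `S^{2k}` is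
symmetric and closed, `‖S^{2k} f + f‖ ≥ ‖f‖` on its domain, and in cardinal
arithmetic `n₊(S^{2k}) = n₋(S^{2k}) = k·n₊(S) + k·n₋(S)`. -/
theorem even_powers_deficiency_cardinal (S : H →ₗ.[ℂ] H)
    (hd : Dense (S.domain : Set H)) (hc : S.IsClosed) (hsym : IsSymmP S)
    (k : ℕ) (hk : 1 ≤ k)
    (hdense : ∀ ℓ : ℕ, 1 ≤ ℓ → ℓ ≤ k →
      Dense (((pmapPow S (2 * ℓ)).domain : Submodule ℂ H) : Set H)) :
    IsSymmP (pmapPow S (2 * k)) ∧ (pmapPow S (2 * k)).IsClosed ∧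
    (∀ f : (pmapPow S (2 * k)).domain, ‖pmapPow S (2 * k) f + (f : H)‖ ≥ ‖(f : H)‖) ∧
    nPlus (pmapPow S (2 * k)) = (k : Cardinal) * nPlus S + (k : Cardinal) * nMinus S ∧
    nMinus (pmapPow S (2 * k)) = (k : Cardinal) * nPlus S + (k : Cardinal) * nMinus S := by
  exact main_aux S hd hc hsym k hk (hdense k hk le_rfl)
end
end
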